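/- Let k ≥ 1, n ≥ 2k+1, and m = n − 2k − 1. Let x = y = m, T j = m for all j ∈ Fin m (T = N^m E^m), and B j = j for all j ∈ Fin m (B = (EN)^m). Then for every sequence (d_1,…,d_{n−k−1}) of natural numbers, the number of k-triangulations of the convex n-gon in which, for every 1 ≤ i ≤ n−k−1, vertex i is joined by nontrivial diagonals to exactly d_i of the vertices i+1,…,n, equals the number of tuples P ∈ P^k(T,B) such that h_{i−1}(P) = d_i for 1 ≤ i ≤ k+1 and u_{i−k−1}(P) + d_i + k + i = n for k+1 < i ≤ n−k−1. -/

import Mathlib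

/-- A path `P` lies in `P(T,B)`: it is weakly increasing (monotone) and lies
weakly between the boundaries `B` and `T`. -/
def InP {x y : ℕ} (T B P : Fin x → Fin (y+1)) : Prop :=
  Monotone P ∧ ∀ j, B j ≤ P j ∧ P j ≤ T j

/-- A `k`-tuple of paths lies in `P^k(T,B)`: every path lies in `P(T,B)` and
each path lies weakly above the next one. -/
def InPk {x y k : ℕ} (T B : Fin x → Fin (y+1)) (P : Fin k → Fin x → Fin (y+1)) : Prop :=
  (∀ i, InP T B (P i)) ∧
  ∀ (i : Fin k) (hi : (i : ℕ) + 1 < k) (j : Fin x), P ⟨(i : ℕ) + 1, hi⟩ j ≤ P i j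

/-- The extended tuple, with the conventions `P_0 = T` and `P_{k+1} = B`. -/
def extP {x y k : ℕ} (T B : Fin x → Fin (y+1)) (P : Fin k → Fin x → Fin (y+1))
    (i : Fin (k+2)) : Fin x → Fin (y+1) :=
  if h0 : (i : ℕ) = 0 then T
  else if hk1 : (i : ℕ) = k + 1 then B
  else P ⟨(i : ℕ) - 1, by have := i.isLt; omega⟩

/-- `hstat T B P i` is the number of east steps shared by `P_i` and `P_{i+1}`. -/
noncomputable def hstat {x y k : ℕ} (T B : Fin x → Fin (y+1))
    (P : Fin k → Fin x → Fin (y+1)) (i : Fin (k+1)) : ℕ :=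
  Nat.card {j : Fin x // extP T B P i.castSucc j = extP T B P i.succ j}

/-- `ustat T B P s` (for `s : Fin (y-1)` representing `s+1 ∈ {1,…,y-1}`) is the
number of east steps at height `y-(s+1)` lying strictly between `T` and `B`
that are used by none of the paths of `P`. -/
noncomputable def ustat {x y k : ℕ} (T B : Fin x → Fin (y+1))
    (P : Fin k → Fin x → Fin (y+1)) (s : Fin (y-1)) : ℕ :=
  Nat.card {j : Fin x // (B j : ℕ) < y - ((s : ℕ) + 1) ∧ y - ((s : ℕ) + 1) < (T j : ℕ) ∧
      ∀ i : Fin k, (P i j : ℕ) ≠ y - ((s : ℕ) + 1)}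

/-- The cyclic distance between two vertices of a convex `n`-gon. -/
def cdist (n : ℕ) (a b : Fin n) : ℕ :=
  min (max (a : ℕ) (b : ℕ) - min (a : ℕ) (b : ℕ))
      (n - (max (a : ℕ) (b : ℕ) - min (a : ℕ) (b : ℕ)))

/-- Two diagonals (stored as pairs with first endpoint smaller) cross. -/
def Crosses {n : ℕ} (p q : Fin n × Fin n) : Prop :=
  (p.1 < q.1 ∧ q.1 < p.2 ∧ p.2 < q.2) ∨ (q.1 < p.1 ∧ p.1 < q.2 ∧ q.2 < p.2)

/-- A family of diagonals of the convex `n`-gon (each stored as a pair `(a,b)`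
with `a < b` and cyclic distance at least 2) with no `k+1` pairwise crossing
members. -/
def ValidFam (n k : ℕ) (D : Set (Fin n × Fin n)) : Prop :=
  (∀ p ∈ D, p.1 < p.2 ∧ 2 ≤ cdist n p.1 p.2) ∧
  ¬ ∃ f : Fin (k+1) → Fin n × Fin n, Function.Injective f ∧ (∀ i, f i ∈ D) ∧
      ∀ i j, i ≠ j → Crosses (f i) (f j)

/-- A `k`-triangulation of the convex `n`-gon: a maximal set of diagonals with
no `k+1` pairwise crossing diagonals. -/
def IsKTri (n k : ℕ) (D : Set (Fin n × Fin n)) : Prop :=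
  ValidFam n k D ∧ ∀ D' : Set (Fin n × Fin n), D ⊆ D' → ValidFam n k D' → D' = D

/-- The number of nontrivial diagonals of `D` joining the vertex `v` to a vertex
larger than `v`. -/
noncomputable def triDeg (n k : ℕ) (D : Set (Fin n × Fin n)) (v : Fin n) : ℕ :=
  Nat.card {p : Fin n × Fin n // p ∈ D ∧ p.1 = v ∧ k < cdist n p.1 p.2}

/-! Put `N = n - k`. A nontrivial diagonal `{a, b}`, `a < b`, of the `n`-gon (with vertices `0, …,
n - 1`) is encoded by the cell `(a, n - 1 - b)` of the staircase `i + j + 2 ≤ N`, so that pairwise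
crossing diagonals become southwest chains of cells. By the rank description of the Demazure
product, the set of cells not used by a family of diagonals contains a word for the permutation
`0, …, k - 1, N - 1, N - 2, …, k` exactly when the family has no `k + 1` pairwise crossing
members. Complements of `k`-triangulations are therefore the reduced subwords of the staircase
word with that product, and their generating function by numbers of cells in each row is,
following Fomin and Kirillov, a coefficient of a product of elements `(1 + x u_a)(1 + x u_{a+1})
⋯` of the nilCoxeter algebra. The generating function of the tuples of lattice paths is an entry
of a product of transfer matrices. These commute, and both generating functions satisfy one and
the same recursion by divided differences. So they coincide, and their monomials record the two
systems of statistics in the theorem. -/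

/-! ### Divided differences -/

section DividedDifferences

variable {A K : Type*} [Field K]

/-- The sequence `s_i x` obtained from `x` by exchanging the entries `i` and `i + 1`. -/
def adjSwap (i : ℕ) (x : ℕ → A) : ℕ → A := fun b => x (Equiv.swap i (i + 1) b)

theorem adjSwap_left (i : ℕ) (x : ℕ → A) : adjSwap i x i = x (i + 1) := by simp [adjSwap]

theorem adjSwap_right (i : ℕ) (x : ℕ → A) : adjSwap i x (i + 1) = x i := by simp [adjSwap]

theorem adjSwap_of_ne {i b : ℕ} (x : ℕ → A) (h₁ : b ≠ i) (h₂ : b ≠ i + 1) :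
    adjSwap i x b = x b := by
  simp [adjSwap, Equiv.swap_apply_of_ne_of_ne h₁ h₂]

theorem adjSwap_adjSwap (i : ℕ) (x : ℕ → A) : adjSwap i (adjSwap i x) = x := by
  funext b; simp [adjSwap]

theorem adjSwap_injective {i : ℕ} {x : ℕ → A} (h : Function.Injective x) :
    Function.Injective (adjSwap i x) :=
  h.comp (Equiv.swap i (i + 1)).injective

theorem adjSwap_comm {i j : ℕ} (x : ℕ → A) (h : j + 2 ≤ i) :
    adjSwap j (adjSwap i x) = adjSwap i (adjSwap j x) := by
  funext b
  simp only [adjSwap, Equiv.swap_apply_def]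
  congr 1
  split_ifs <;> omega

theorem sub_succ_ne_zero {x : ℕ → K} (hx : Function.Injective x) (i : ℕ) :
    x i - x (i + 1) ≠ 0 :=
  sub_ne_zero.2 (hx.ne (Nat.succ_ne_self i).symm)

/-- The divided difference `∂_i`, acting on functions of a sequence of variables. Its values are
meaningful at injective sequences only, where the denominator does not vanish. -/
def divDiff (i : ℕ) (φ : (ℕ → K) → K) : (ℕ → K) → K :=
  fun x => (φ x - φ (adjSwap i x)) / (x i - x (i + 1))

/-- The isobaric divided difference `π_i = ∂_i ∘ x_i`. -/
def isoDivDiff (i : ℕ) (φ : (ℕ → K) → K) : (ℕ → K) → K :=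
  fun x => (x i * φ x - x (i + 1) * φ (adjSwap i x)) / (x i - x (i + 1))

/-- The composite `∂_{j-1} ⋯ ∂_1 ∂_0`. -/
def divDiffs : ℕ → ((ℕ → K) → K) → (ℕ → K) → K
  | 0, φ => φ
  | j + 1, φ => divDiff j (divDiffs j φ)

/-- The composite `π_{j-1} ⋯ π_1 π_0`. -/
def isoDivDiffs : ℕ → ((ℕ → K) → K) → (ℕ → K) → K
  | 0, φ => φ
  | j + 1, φ => isoDivDiff j (isoDivDiffs j φ)

theorem divDiffs_congr {φ ψ : (ℕ → K) → K} (h : ∀ y, Function.Injective y → φ y = ψ y) :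
    ∀ (j : ℕ) (x : ℕ → K), Function.Injective x → divDiffs j φ x = divDiffs j ψ x
  | 0, x, hx => h x hx
  | j + 1, x, hx => by
    simp only [divDiffs, divDiff, divDiffs_congr h j x hx,
      divDiffs_congr h j _ (adjSwap_injective hx)]

/-- Invariance of a function under `s_i`, required at injective sequences only. -/
def AdjInvariant (i : ℕ) (φ : (ℕ → K) → K) : Prop :=
  ∀ x, Function.Injective x → φ (adjSwap i x) = φ x

theorem AdjInvariant.divDiffs {φ : (ℕ → K) → K} {i : ℕ} (hφ : AdjInvariant i φ) :
    ∀ j < i, AdjInvariant i (divDiffs j φ)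
  | 0, _ => hφ
  | j + 1, hj => by
    intro x hx
    have ih := AdjInvariant.divDiffs hφ j (by omega)
    simp only [_root_.divDiffs, divDiff]
    rw [adjSwap_comm x (by omega : j + 2 ≤ i), ih x hx, ih _ (adjSwap_injective hx),
      adjSwap_of_ne x (by omega) (by omega), adjSwap_of_ne x (by omega) (by omega)]

theorem AdjInvariant.zero_pow_mul {f : (ℕ → K) → K} {i : ℕ} (hf : AdjInvariant (i + 1) f)
    (a : ℕ) : AdjInvariant (i + 1) (fun x => x 0 ^ a * f x) := by
  intro x hx
  simp only
  rw [hf x hx, adjSwap_of_ne x (by omega) (by omega)]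

theorem divDiffs_pow_succ {f : (ℕ → K) → K} (a : ℕ) :
    ∀ j, (∀ i < j, AdjInvariant (i + 1) f) → ∀ x, Function.Injective x →
      divDiffs (j + 1) (fun x => x 0 ^ (a + 1) * f x) x =
        x (j + 1) * divDiffs (j + 1) (fun x => x 0 ^ a * f x) x +
          divDiffs j (fun x => x 0 ^ a * f x) x
  | 0, _, x, hx => by
    have h := sub_succ_ne_zero hx 0
    simp only [divDiffs, divDiff, adjSwap_left]
    simp only [zero_add] at h ⊢
    field_simp
    ring
  | j + 1, hf, x, hx => by
    have h := sub_succ_ne_zero hx (j + 1)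
    have ih := divDiffs_pow_succ a j fun i hi => hf i (by omega)
    have invariant : divDiffs j (fun x => x 0 ^ a * f x) (adjSwap (j + 1) x) =
        divDiffs j (fun x => x 0 ^ a * f x) x :=
      ((hf j (by omega)).zero_pow_mul a).divDiffs j (by omega) x hx
    have at_x := ih x hx
    have at_swap := ih _ (adjSwap_injective (i := j + 1) hx)
    rw [adjSwap_left, invariant] at at_swap
    have unfold_succ : divDiffs (j + 1 + 1) (fun x => x 0 ^ a * f x) x =
        (divDiffs (j + 1) (fun x => x 0 ^ a * f x) x -
          divDiffs (j + 1) (fun x => x 0 ^ a * f x) (adjSwap (j + 1) x)) /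
          (x (j + 1) - x (j + 1 + 1)) := rfl
    rw [unfold_succ, divDiffs, divDiff, at_x, at_swap, div_eq_iff h, add_mul, mul_assoc,
      div_mul_cancel₀ _ h]
    ring

theorem isoDivDiffs_pow_mul {f : (ℕ → K) → K} (a : ℕ) :
    ∀ j, (∀ i, i + 1 < j → AdjInvariant (i + 1) f) → ∀ x, Function.Injective x →
      isoDivDiffs j (fun x => x 0 ^ a * f x) x = divDiffs j (fun x => x 0 ^ (a + j) * f x) x
  | 0, _, _, _ => rfl
  | j + 1, hf, x, hx => by
    have h := sub_succ_ne_zero hx j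
    have ih := isoDivDiffs_pow_mul a j fun i hi => hf i (by omega)
    rw [← add_assoc, divDiffs_pow_succ (a + j) j (fun i hi => hf i (by omega)) x hx, isoDivDiffs,
      isoDivDiff, ih x hx, ih _ (adjSwap_injective hx), divDiffs, divDiff, div_eq_iff h, add_mul,
      mul_assoc, div_mul_cancel₀ _ h]
    ring

end DividedDifferences

/-! ### Commuting transfer matrices -/

section TransferMatrices

variable {K : Type*} [Field K]

/-- The weight of a column growing from height `a` to height `h`: every height strictly in between
is skipped and contributes its variable `t s`, and a column that really grows contributes `x`. -/
def jumpWeight (t : ℕ → K) (x : K) (a h : ℕ) : K :=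
  if a = h then 1 else if a < h then x * ∏ s ∈ Finset.Ioo a h, t s else 0

theorem jumpWeight_self (t : ℕ → K) (x : K) (a : ℕ) : jumpWeight t x a a = 1 := by
  simp [jumpWeight]

theorem jumpWeight_of_lt (t : ℕ → K) (x : K) {a h : ℕ} (hah : a < h) :
    jumpWeight t x a h = x * ∏ s ∈ Finset.Ioo a h, t s := by
  simp [jumpWeight, hah, hah.ne]

theorem jumpWeight_of_gt (t : ℕ → K) (x : K) {a h : ℕ} (hah : h < a) : jumpWeight t x a h = 0 := by
  simp [jumpWeight, hah.ne', hah.not_gt]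

/-- The weight of a column growing from `p c` to `a` with variable `x` and then to `h c` with
variable `y`. -/
def twoJumpWeight (t : ℕ → K) (p h : ℕ → ℕ) (x y : K) (c a : ℕ) : K :=
  jumpWeight t x (p c) a * jumpWeight t y a (h c)

/-- The sum of `∏ c < N, w c (μ c)` over all `μ` with `h ≥ μ` and
`μ 0 ≥ μ 1 ≥ ⋯ ≥ μ (N - 1) ≥ b`, provided that `h` is antitone. -/
def antitoneSum (w : ℕ → ℕ → K) (h : ℕ → ℕ) : ℕ → ℕ → K
  | 0, _ => 1
  | N + 1, b => ∑ a ∈ Finset.Icc b (h N), w N a * antitoneSum w h N a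

theorem antitoneSum_succ_of_le (w : ℕ → ℕ → K) (h : ℕ → ℕ) {N b : ℕ} (hb : b ≤ h N) :
    antitoneSum w h (N + 1) b =
      w N b * antitoneSum w h N b + antitoneSum w h (N + 1) (b + 1) := by
  simp only [antitoneSum]
  rw [← Finset.insert_Icc_add_one_left_eq_Icc hb, Finset.sum_insert (by simp)]

/-- The entries of the product of the transfer matrices with parameters `x` and `y` between the
first `N` columns of `p` and of `h`, with the last intermediate column bounded below by `b`. -/
def twoStepSum (t : ℕ → K) (p h : ℕ → ℕ) (x y : K) : ℕ → ℕ → K :=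
  antitoneSum (twoJumpWeight t p h x y) h

theorem twoStepSum_zero (t : ℕ → K) (p h : ℕ → ℕ) (x y : K) (b : ℕ) :
    twoStepSum t p h x y 0 b = 1 := rfl

theorem twoStepSum_succ (t : ℕ → K) (p h : ℕ → ℕ) (x y : K) {N b : ℕ} (hb : b ≤ h N) :
    twoStepSum t p h x y (N + 1) b =
      jumpWeight t x (p N) b * jumpWeight t y b (h N) * twoStepSum t p h x y N b +
        twoStepSum t p h x y (N + 1) (b + 1) :=
  antitoneSum_succ_of_le _ h hb

theorem twoStepSum_of_le (t : ℕ → K) (p h : ℕ → ℕ) (x y : K) {N : ℕ} :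
    ∀ {b : ℕ}, b ≤ p N → twoStepSum t p h x y (N + 1) b = twoStepSum t p h x y (N + 1) 0
  | 0, _ => rfl
  | b + 1, hb => by
    rw [← twoStepSum_of_le t p h x y (show b ≤ p N by omega)]
    rcases le_or_gt b (h N) with hbN | hbN
    · rw [twoStepSum_succ t p h x y hbN, jumpWeight_of_gt t x (show b < p N by omega)]
      ring
    · simp only [twoStepSum, antitoneSum, Finset.Icc_eq_empty_of_lt hbN,
        Finset.Icc_eq_empty_of_lt (show h N < b + 1 by omega)]

variable {t : ℕ → K} {p h : ℕ → ℕ} {N b : ℕ}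

theorem twoStepSum_of_le_succ (hp : Antitone p) (x y : K) (hb : b ≤ p N) :
    twoStepSum t p h x y N b = twoStepSum t p h x y N 0 := by
  cases N with
  | zero => rfl
  | succ N => exact twoStepSum_of_le t p h x y (hb.trans (hp N.le_succ))

theorem twoStepSum_succ_self (x y : K) (hN : p N < h N) :
    twoStepSum t p h x y (N + 1) 0 =
      y * (∏ s ∈ Finset.Ioo (p N) (h N), t s) * twoStepSum t p h x y N (p N) +
        twoStepSum t p h x y (N + 1) (p N + 1) := by
  rw [← twoStepSum_of_le t p h x y le_rfl, twoStepSum_succ t p h x y hN.le, jumpWeight_self,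
    jumpWeight_of_lt t y hN, one_mul]

theorem prod_Ioo_split {M : Type*} [CommMonoid M] (t : ℕ → M) {a b c : ℕ} (hab : a < b)
    (hbc : b < c) :
    ∏ s ∈ Finset.Ioo a c, t s =
      (∏ s ∈ Finset.Ioo a b, t s) * t b * ∏ s ∈ Finset.Ioo b c, t s := by
  simp only [← Finset.Ico_add_one_left_eq_Ioo]
  rw [mul_assoc, ← Finset.prod_eq_prod_Ico_succ_bot hbc]
  exact (Finset.prod_Ico_consecutive t hab hbc.le).symm

/-- The defect, with respect to exchanging `x` and `y`, of the sum over the columns `0, …, N`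
whose last column is at least `b`: see `twoStepDefect_comm`. -/
def twoStepDefect (t : ℕ → K) (p h : ℕ → ℕ) (x y : K) (N b : ℕ) : K :=
  twoStepSum t p h x y (N + 1) b -
    x * (∏ s ∈ Finset.Ioo (p N) (h N), t s) * twoStepSum t p h x y N b

theorem twoStepDefect_top (x y : K) (hN : p N < h N) : twoStepDefect t p h x y N (h N) = 0 := by
  rw [twoStepDefect, twoStepSum_succ t p h x y le_rfl, jumpWeight_self, jumpWeight_of_lt t x hN]
  simp [twoStepSum, antitoneSum]

theorem twoStepDefect_sub (x y : K) (h₁ : p N < b) (h₂ : b < h N) :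
    twoStepDefect t p h x y N b - twoStepDefect t p h x y N (b + 1) =
      x * (∏ s ∈ Finset.Ioo (p N) b, t s) * (∏ s ∈ Finset.Ioo b (h N), t s) *
        (y * twoStepSum t p h x y N b -
          t b * (twoStepSum t p h x y N b - twoStepSum t p h x y N (b + 1))) := by
  rw [twoStepDefect, twoStepDefect, twoStepSum_succ t p h x y h₂.le, jumpWeight_of_lt t x h₁,
    jumpWeight_of_lt t y h₂, prod_Ioo_split t h₁ h₂]
  ring

theorem twoStepDefect_sub_comm (x y : K) (hp : Antitone p) (hh : Antitone h)
    (comm : ∀ M ≤ N, twoStepSum t p h x y M 0 = twoStepSum t p h y x M 0)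
    (defect : ∀ M < N, ∀ b, p M < b → b ≤ h M →
      twoStepDefect t p h x y M b = twoStepDefect t p h y x M b)
    (h₁ : p N < b) (h₂ : b < h N) :
    twoStepDefect t p h x y N b - twoStepDefect t p h x y N (b + 1) =
      twoStepDefect t p h y x N b - twoStepDefect t p h y x N (b + 1) := by
  rw [twoStepDefect_sub x y h₁ h₂, twoStepDefect_sub y x h₁ h₂]
  cases N with
  | zero => simp only [twoStepSum_zero]; ring
  | succ N =>
    have hbN : b < h N := h₂.trans_le (hh N.le_succ)
    have e : ∀ x y : K, twoStepSum t p h x y (N + 1) b - twoStepSum t p h x y (N + 1) (b + 1) =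
        jumpWeight t x (p N) b * jumpWeight t y b (h N) * twoStepSum t p h x y N b := fun x y => by
      rw [twoStepSum_succ t p h x y hbN.le]; ring
    rw [e, e]
    rcases lt_trichotomy b (p N) with hb | rfl | hb
    · rw [jumpWeight_of_gt t x hb, jumpWeight_of_gt t y hb, twoStepSum_of_le t p h x y hb.le,
        twoStepSum_of_le t p h y x hb.le, comm _ le_rfl]
      ring
    · have low : ∀ x y : K, twoStepSum t p h x y N (p N) = twoStepSum t p h x y N 0 :=
        fun x y => twoStepSum_of_le_succ hp x y le_rfl
      rw [jumpWeight_self, jumpWeight_self, jumpWeight_of_lt t x hbN, jumpWeight_of_lt t y hbN,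
        twoStepSum_of_le t p h x y le_rfl, twoStepSum_of_le t p h y x le_rfl, low x y,
        low y x, comm _ le_rfl, comm N (by omega)]
      ring
    · have d := defect N (by omega) b hb hbN.le
      rw [twoStepDefect, twoStepDefect, prod_Ioo_split t hb hbN] at d
      rw [jumpWeight_of_lt t x hb, jumpWeight_of_lt t y hb, jumpWeight_of_lt t x hbN,
        jumpWeight_of_lt t y hbN]
      linear_combination (x * y * (∏ s ∈ Finset.Ioo (p (N + 1)) b, t s) *
        ∏ s ∈ Finset.Ioo b (h (N + 1)), t s) * d

theorem twoStepDefect_comm (x y : K) (hp : Antitone p) (hh : Antitone h)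
    (comm : ∀ M ≤ N, twoStepSum t p h x y M 0 = twoStepSum t p h y x M 0)
    (h₁ : p N < b) (h₂ : b ≤ h N) :
    twoStepDefect t p h x y N b = twoStepDefect t p h y x N b := by
  induction N using Nat.strong_induction_on generalizing b with
  | _ N ih =>
    induction h₂ using Nat.decreasingInduction with
    | self => rw [twoStepDefect_top x y h₁, twoStepDefect_top y x h₁]
    | of_succ b hb ihb =>
      have step := twoStepDefect_sub_comm x y hp hh comm
        (fun M hM b => ih M hM fun L hL => comm L (by omega)) h₁ hb
      linear_combination step + ihb (by omega)

theorem twoStepSum_comm_of_eq_lower (x y : K) (hp : Antitone p) (hh : Antitone h)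
    (comm : ∀ M ≤ N, twoStepSum t p h x y M 0 = twoStepSum t p h y x M 0) (hN : p N < h N) :
    y * twoStepSum t p h x y N 0 + x * twoStepSum t p h x y N (p N + 1) =
      x * twoStepSum t p h y x N 0 + y * twoStepSum t p h y x N (p N + 1) := by
  cases N with
  | zero => simp only [twoStepSum_zero]; ring
  | succ N =>
    rcases (hp N.le_succ).lt_or_eq with hlt | heq
    · rw [twoStepSum_of_le t p h x y hlt, twoStepSum_of_le t p h y x hlt, comm _ le_rfl]
      ring
    · have hN' : p N < h N := heq ▸ hN.trans_le (hh N.le_succ)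
      have e₁ := twoStepSum_succ_self (t := t) x y hN'
      have e₂ := twoStepSum_succ_self (t := t) y x hN'
      rw [twoStepSum_of_le_succ hp _ _ le_rfl] at e₁ e₂
      rw [heq]
      linear_combination (-x) * e₁ + y * e₂ + (x + y) * comm (N + 1) le_rfl -
        x * y * (∏ s ∈ Finset.Ioo (p N) (h N), t s) * comm N (by omega)

theorem twoStepSum_comm (x y : K) (hp : Antitone p) (hh : Antitone h) (N : ℕ) :
    twoStepSum t p h x y N 0 = twoStepSum t p h y x N 0 := by
  induction N using Nat.strong_induction_on with
  | _ N ih =>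
    cases N with
    | zero => rfl
    | succ N =>
      have comm : ∀ M ≤ N, twoStepSum t p h x y M 0 = twoStepSum t p h y x M 0 :=
        fun M hM => ih M (by omega)
      rcases lt_trichotomy (p N) (h N) with hN | hN | hN
      · have d := twoStepDefect_comm x y hp hh comm (lt_add_one (p N)) hN
        have c := twoStepSum_comm_of_eq_lower x y hp hh comm hN
        rw [twoStepDefect, twoStepDefect] at d
        rw [twoStepSum_succ_self x y hN, twoStepSum_succ_self y x hN,
          twoStepSum_of_le_succ hp x y le_rfl, twoStepSum_of_le_succ hp y x le_rfl]
        linear_combination d + (∏ s ∈ Finset.Ioo (p N) (h N), t s) * c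
      · have top : ∀ x y : K, twoStepSum t p h x y (N + 1) 0 = twoStepSum t p h x y N 0 := by
          intro x y
          rw [← twoStepSum_of_le t p h x y le_rfl, twoStepSum_succ t p h x y hN.le, ← hN,
            jumpWeight_self, jumpWeight_self, ← twoStepSum_of_le_succ hp x y le_rfl]
          simp [twoStepSum, antitoneSum, hN]
        rw [top, top, comm N le_rfl]
      · have empty : ∀ x y : K, twoStepSum t p h x y (N + 1) 0 = 0 := by
          intro x y
          rw [← twoStepSum_of_le t p h x y le_rfl]
          simp [twoStepSum, antitoneSum, Finset.Icc_eq_empty_of_lt hN]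
        rw [empty, empty]

theorem twoStepSum_one_comm (x y : K) (hp : Antitone p) (hh : Antitone h)
    (hpos : ∀ c < N, 0 < h c) :
    x * (twoStepSum t p h x y N 0 - twoStepSum t p h x y N 1) =
      y * (twoStepSum t p h y x N 0 - twoStepSum t p h y x N 1) := by
  cases N with
  | zero => simp [twoStepSum_zero]
  | succ N =>
    rcases Nat.eq_zero_or_pos (p N) with h0 | h0
    · have hN : p N < h N := h0 ▸ hpos N N.lt_succ_self
      rw [twoStepSum_succ_self x y hN, twoStepSum_succ_self y x hN,
        twoStepSum_of_le_succ hp x y le_rfl, twoStepSum_of_le_succ hp y x le_rfl,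
        twoStepSum_comm x y hp hh N, h0]
      ring
    · rw [twoStepSum_of_le t p h x y h0, twoStepSum_of_le t p h y x h0]
      ring

end TransferMatrices

/-! ### Chains of decreasing sequences -/

section FanSums

variable {K : Type*} [Field K] {M : ℕ}

open Classical in
/-- The weakly decreasing sequences `μ` with `b ≤ μ c ≤ l c` for all `c`. -/
noncomputable def antitoneIcc (b : ℕ) (l : Fin M → ℕ) : Finset (Fin M → ℕ) :=
  {μ ∈ Finset.Icc (fun _ => b) l | Antitone μ}

theorem mem_antitoneIcc {b : ℕ} {l μ : Fin M → ℕ} :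
    μ ∈ antitoneIcc b l ↔ (∀ c, b ≤ μ c) ∧ μ ≤ l ∧ Antitone μ := by
  simp [antitoneIcc, Pi.le_def, and_assoc]

theorem snoc_mem_antitoneIcc {b a : ℕ} {l : Fin (M + 1) → ℕ} {μ : Fin M → ℕ} :
    (Fin.snoc μ a : Fin (M + 1) → ℕ) ∈ antitoneIcc b l ↔
      a ∈ Finset.Icc b (l (Fin.last M)) ∧ μ ∈ antitoneIcc a (Fin.init l) := by
  have anti : Antitone (Fin.snoc μ a : Fin (M + 1) → ℕ) ↔ (∀ c, a ≤ μ c) ∧ Antitone μ := by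
    simp only [Antitone, Fin.forall_fin_succ', Fin.snoc_castSucc, Fin.snoc_last,
      Fin.castSucc_le_castSucc_iff, le_refl, implies_true, Fin.le_last, true_implies, and_true,
      Fin.last_le_iff, Fin.castSucc_ne_last, false_implies]
    exact ⟨fun h => ⟨fun c => (h c).2, fun c c' hc => (h c).1 c' hc⟩,
      fun h c => ⟨fun c' hc => h.2 hc, h.1 c⟩⟩
  simp only [mem_antitoneIcc, anti, Pi.le_def, Fin.forall_fin_succ', Fin.snoc_castSucc,
    Fin.snoc_last, Finset.mem_Icc, Fin.init]
  exact ⟨fun h => ⟨⟨h.1.2, h.2.1.2⟩, h.2.2.1, h.2.1.1, h.2.2.2⟩,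
    fun h => ⟨⟨fun c => h.1.1.trans (h.2.1 c), h.1.1⟩, ⟨h.2.2.1, h.1.2⟩, h.2.1, h.2.2.2⟩⟩

theorem sum_antitoneIcc_succ (b : ℕ) (l : Fin (M + 1) → ℕ) (F : (Fin (M + 1) → ℕ) → K) :
    ∑ μ ∈ antitoneIcc b l, F μ =
      ∑ a ∈ Finset.Icc b (l (Fin.last M)), ∑ μ ∈ antitoneIcc a (Fin.init l),
        F (Fin.snoc μ a : Fin (M + 1) → ℕ) := by
  rw [Finset.sum_sigma']
  refine Finset.sum_bij' (fun μ _ => ⟨μ (Fin.last M), Fin.init μ⟩)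
    (fun p _ => Fin.snoc p.2 p.1) (fun μ hμ => ?_) (fun p hp => ?_) ?_ ?_ ?_
  · rw [← Fin.snoc_init_self μ, snoc_mem_antitoneIcc] at hμ
    simpa using hμ
  · exact snoc_mem_antitoneIcc.2 (by simpa using hp)
  all_goals intros; simp

theorem sum_antitoneIcc_add_one (l : Fin M → ℕ) (F : (Fin M → ℕ) → K) :
    ∑ μ ∈ antitoneIcc 1 (l + 1), F μ = ∑ μ ∈ antitoneIcc 0 l, F (μ + 1) := by
  refine Finset.sum_bij' (fun μ _ => μ - 1) (fun μ _ => μ + 1) (fun μ hμ => ?_) (fun μ hμ => ?_)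
    (fun μ hμ => ?_) (fun μ _ => add_tsub_cancel_right μ 1) (fun μ hμ => ?_)
  · rw [mem_antitoneIcc] at hμ ⊢
    exact ⟨fun _ => Nat.zero_le _, tsub_le_iff_right.2 hμ.2.1,
      fun c c' hc => Nat.sub_le_sub_right (hμ.2.2 hc) 1⟩
  · rw [mem_antitoneIcc] at hμ ⊢
    exact ⟨fun _ => Nat.le_add_left _ _, add_le_add_left hμ.2.1 1,
      fun c c' hc => Nat.add_le_add_right (hμ.2.2 hc) 1⟩
  all_goals rw [mem_antitoneIcc] at hμ; rw [tsub_add_cancel_of_le hμ.1]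

theorem sum_antitoneIcc_prod (w : ℕ → ℕ → K) (h : ℕ → ℕ) (M b : ℕ) :
    ∑ μ ∈ antitoneIcc b (fun c : Fin M => h c), ∏ c : Fin M, w c (μ c) = antitoneSum w h M b := by
  induction M generalizing b with
  | zero =>
    have : antitoneIcc b (fun c : Fin 0 => h c) = {fun c => c.elim0} := by
      ext μ; simp [mem_antitoneIcc, Subsingleton.elim μ (fun c => c.elim0), Subsingleton.antitone]
    simp [this, antitoneSum]
  | succ M ih =>
    rw [sum_antitoneIcc_succ, antitoneSum]
    refine Finset.sum_congr rfl fun a _ => ?_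
    rw [← ih, Finset.mul_sum]
    refine Finset.sum_congr rfl fun μ _ => ?_
    simp [Fin.prod_univ_castSucc, mul_comm]

/-- The matrix entry between `μ` and `l` of the transfer matrix with parameter `x`. -/
def transferEntry (t : ℕ → K) (x : K) (μ l : Fin M → ℕ) : K := ∏ c, jumpWeight t x (μ c) (l c)

/-- The transfer matrix with parameter `x`, restricted to intermediate sequences bounded below
by `b`, as an operator. -/
noncomputable def transfer (t : ℕ → K) (b : ℕ) (x : K) (φ : (Fin M → ℕ) → K) (l : Fin M → ℕ) : K :=
  ∑ μ ∈ antitoneIcc b l, transferEntry t x μ l * φ μ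

theorem transferEntry_eq_zero (t : ℕ → K) (x : K) {μ l : Fin M → ℕ} (h : ¬ μ ≤ l) :
    transferEntry t x μ l = 0 := by
  obtain ⟨c, hc⟩ := not_forall.1 h
  exact Finset.prod_eq_zero (Finset.mem_univ c) (jumpWeight_of_gt t x (not_le.1 hc))

/-- Extension by zero of a finite sequence. -/
def extendZero (l : Fin M → ℕ) (c : ℕ) : ℕ := if h : c < M then l ⟨c, h⟩ else 0

theorem extendZero_coe (l : Fin M → ℕ) (c : Fin M) : extendZero l c = l c := by simp [extendZero]

theorem extendZero_antitone {l : Fin M → ℕ} (hl : Antitone l) : Antitone (extendZero l) := by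
  intro c c' hc
  unfold extendZero
  split_ifs with h' h
  · exact hl (by exact hc)
  · omega
  · exact Nat.zero_le _
  · rfl

theorem transfer_transfer (t : ℕ → K) (b : ℕ) (x y : K) (φ : (Fin M → ℕ) → K) (l : Fin M → ℕ) :
    transfer t b y (transfer t 0 x φ) l =
      ∑ ν ∈ antitoneIcc 0 l, twoStepSum t (extendZero ν) (extendZero l) x y M b * φ ν := by
  have inner : ∀ μ ∈ antitoneIcc b l,
      transfer t 0 x φ μ = ∑ ν ∈ antitoneIcc 0 l, transferEntry t x ν μ * φ ν := by
    intro μ hμ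
    rw [mem_antitoneIcc] at hμ
    refine Finset.sum_subset (fun ν hν => ?_) fun ν hν hν' => ?_
    · rw [mem_antitoneIcc] at hν ⊢
      exact ⟨hν.1, hν.2.1.trans hμ.2.1, hν.2.2⟩
    · rw [mem_antitoneIcc] at hν hν'
      rw [transferEntry_eq_zero t x fun h => hν' ⟨hν.1, h, hν.2.2⟩, zero_mul]
  rw [transfer, Finset.sum_congr rfl fun μ hμ => by rw [inner μ hμ, Finset.mul_sum],
    Finset.sum_comm]
  refine Finset.sum_congr rfl fun ν _ => ?_
  rw [twoStepSum, ← sum_antitoneIcc_prod, Finset.sum_mul]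
  simp only [extendZero_coe, twoJumpWeight, Finset.prod_mul_distrib]
  refine Finset.sum_congr rfl fun μ _ => ?_
  simp only [transferEntry]
  ring

theorem transfer_comm (t : ℕ → K) (x y : K) (φ : (Fin M → ℕ) → K) {l : Fin M → ℕ}
    (hl : Antitone l) :
    transfer t 0 y (transfer t 0 x φ) l = transfer t 0 x (transfer t 0 y φ) l := by
  rw [transfer_transfer, transfer_transfer]
  refine Finset.sum_congr rfl fun ν hν => ?_
  rw [twoStepSum_comm x y (extendZero_antitone (mem_antitoneIcc.1 hν).2.2) (extendZero_antitone hl)]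

theorem transfer_one_comm (t : ℕ → K) (x y : K) (φ : (Fin M → ℕ) → K) {l : Fin M → ℕ}
    (hl : Antitone l) (hpos : ∀ c, 0 < l c) :
    x * (transfer t 0 y (transfer t 0 x φ) l - transfer t 1 y (transfer t 0 x φ) l) =
      y * (transfer t 0 x (transfer t 0 y φ) l - transfer t 1 x (transfer t 0 y φ) l) := by
  simp only [transfer_transfer, ← Finset.sum_sub_distrib, Finset.mul_sum, ← sub_mul, ← mul_assoc]
  refine Finset.sum_congr rfl fun ν hν => ?_
  rw [twoStepSum_one_comm x y (extendZero_antitone (mem_antitoneIcc.1 hν).2.2)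
    (extendZero_antitone hl) fun c hc => by simpa [extendZero, hc] using hpos ⟨c, hc⟩]

theorem transfer_congr (t : ℕ → K) (b : ℕ) (x : K) {φ ψ : (Fin M → ℕ) → K}
    (h : ∀ μ, Antitone μ → φ μ = ψ μ) (l : Fin M → ℕ) : transfer t b x φ l = transfer t b x ψ l :=
  Finset.sum_congr rfl fun μ hμ => by rw [h μ (mem_antitoneIcc.1 hμ).2.2]

/-- The sum over all chains `0 ≤ μ₁ ≤ ⋯ ≤ l` of weakly decreasing sequences, one step for every
member of the list of parameters, of the products of the transfer matrix entries. -/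
noncomputable def chainSum (t : ℕ → K) : List K → (Fin M → ℕ) → K
  | [], l => if l = 0 then 1 else 0
  | x :: xs, l => transfer t 0 x (chainSum t xs) l

theorem chainSum_perm (t : ℕ → K) {xs ys : List K} (h : xs.Perm ys) :
    ∀ {l : Fin M → ℕ}, Antitone l → chainSum t xs l = chainSum t ys l := by
  induction h with
  | nil => exact fun _ => rfl
  | cons x _ ih => exact fun _ => transfer_congr t 0 x (fun _ => ih) _
  | swap x y xs => exact fun hl => transfer_comm t x y (chainSum t xs) hl
  | trans _ _ ih₁ ih₂ => exact fun hl => (ih₁ hl).trans (ih₂ hl)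

theorem chainSum_snoc_zero (t : ℕ → K) (xs : List K) (l : Fin M → ℕ) :
    chainSum t xs (Fin.snoc l 0 : Fin (M + 1) → ℕ) = chainSum t xs l := by
  induction xs generalizing l with
  | nil =>
    have : (Fin.snoc l 0 : Fin (M + 1) → ℕ) = 0 ↔ l = 0 := by
      simp [funext_iff, Fin.forall_fin_succ']
    simp only [chainSum, this]
  | cons x xs ih =>
    simp [chainSum, transfer, sum_antitoneIcc_succ, transferEntry, Fin.prod_univ_castSucc,
      jumpWeight_self, ih]

theorem jumpWeight_shift (t : ℕ → K) (x : K) (a h : ℕ) :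
    jumpWeight (fun s => t (s + 1)) x a h = jumpWeight t x (a + 1) (h + 1) := by
  simp only [jumpWeight, add_left_inj, add_lt_add_iff_right]
  rw [← Finset.map_add_right_Ioo a h 1, Finset.prod_map]
  rfl

theorem transferEntry_shift (t : ℕ → K) (x : K) (μ l : Fin M → ℕ) :
    transferEntry (fun s => t (s + 1)) x μ l = transferEntry t x (μ + 1) (l + 1) :=
  Finset.prod_congr rfl fun c _ => jumpWeight_shift t x (μ c) (l c)

theorem transferEntry_zero_left (t : ℕ → K) (x : K) (l : Fin M → ℕ) :
    transferEntry t x 0 (l + 1) = x ^ M * transferEntry (fun s => t (s + 1)) (t 1) 0 l := by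
  have column : ∀ h, jumpWeight t x 0 (h + 1) = x * jumpWeight (fun s => t (s + 1)) (t 1) 0 h := by
    intro h
    rcases Nat.eq_zero_or_pos h with rfl | hh
    · simp [jumpWeight, show Finset.Ioo 0 1 = ∅ from rfl]
    · rw [jumpWeight_shift, jumpWeight_of_lt t _ (Nat.succ_lt_succ hh),
        jumpWeight_of_lt t x h.succ_pos, prod_Ioo_split t zero_lt_one (Nat.succ_lt_succ hh),
        show Finset.Ioo 0 1 = ∅ from rfl, Finset.prod_empty, one_mul]
      rfl
  simp [transferEntry, column, Finset.prod_mul_distrib]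

theorem chainSum_singleton (t : ℕ → K) (x : K) (l : Fin M → ℕ) :
    chainSum t [x] l = transferEntry t x 0 l := by
  have h0 : (0 : Fin M → ℕ) ∈ antitoneIcc 0 l :=
    mem_antitoneIcc.2 ⟨fun _ => le_rfl, fun _ => Nat.zero_le _, antitone_const⟩
  simp [chainSum, transfer, Finset.sum_ite_eq', h0]

end FanSums

/-! ### The divided difference recursion for fans -/

section FanRecursion

variable {A K : Type*} [Field K] {M : ℕ}

theorem isoDivDiffs_congr {φ ψ : (ℕ → K) → K} :
    ∀ (j : ℕ) {x : ℕ → K}, (∀ y, (∀ b, j < b → y b = x b) → φ y = ψ y) →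
      isoDivDiffs j φ x = isoDivDiffs j ψ x
  | 0, x, h => h x fun _ _ => rfl
  | j + 1, x, h => by
    have at_x := isoDivDiffs_congr j (x := x) fun y hy => h y fun b hb => hy b (by omega)
    have at_swap := isoDivDiffs_congr j (x := adjSwap j x) fun y hy => h y fun b hb => by
      rw [hy b (by omega), adjSwap_of_ne x (by omega) (by omega)]
    simp only [isoDivDiffs, isoDivDiff, at_x, at_swap]

theorem isoDivDiffs_sum_const_mul {ι : Type*} (s : Finset ι) (c : ι → K) (φ : ι → (ℕ → K) → K) :
    ∀ (j : ℕ) (x : ℕ → K), isoDivDiffs j (fun y => ∑ i ∈ s, c i * φ i y) x =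
      ∑ i ∈ s, c i * isoDivDiffs j (φ i) x
  | 0, _ => rfl
  | j + 1, x => by
    have ih := isoDivDiffs_sum_const_mul s c φ j
    simp only [isoDivDiffs, isoDivDiff, ih, Finset.mul_sum, ← Finset.sum_sub_distrib,
      Finset.sum_div]
    refine Finset.sum_congr rfl fun i _ => ?_
    ring

/-- The list `[x (j - 1), …, x 1, x 0]`. -/
def revPrefix (x : ℕ → A) : ℕ → List A
  | 0 => []
  | j + 1 => x j :: revPrefix x j

theorem revPrefix_congr {x y : ℕ → A} : ∀ {j : ℕ}, (∀ b < j, x b = y b) →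
    revPrefix x j = revPrefix y j
  | 0, _ => rfl
  | j + 1, h => by
    rw [revPrefix, revPrefix, h j j.lt_succ_self, revPrefix_congr fun b hb => h b (by omega)]

theorem revPrefix_adjSwap_perm (x : ℕ → A) (i d : ℕ) :
    (revPrefix (adjSwap i x) (i + 2 + d)).Perm (revPrefix x (i + 2 + d)) := by
  induction d with
  | zero =>
    have low : revPrefix (adjSwap i x) i = revPrefix x i :=
      revPrefix_congr fun b hb => adjSwap_of_ne x (by omega) (by omega)
    simp only [revPrefix, adjSwap_left, adjSwap_right, low]
    exact List.Perm.swap _ _ _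
  | succ d ih =>
    rw [← add_assoc, revPrefix, revPrefix, adjSwap_of_ne x (by omega) (by omega)]
    exact ih.cons _

theorem revPrefix_update_perm (x : ℕ → A) (a : A) (j : ℕ) :
    (revPrefix (Function.update x 0 a) (j + 1)).Perm (a :: revPrefix (fun b => x (b + 1)) j) := by
  induction j with
  | zero => simp [revPrefix]
  | succ j ih =>
    rw [revPrefix, Function.update_of_ne (by omega)]
    exact (ih.cons _).trans (List.Perm.swap _ _ _)

theorem isoDivDiffs_chainSum (t : ℕ → K) (j : ℕ) {x : ℕ → K} (hx : Function.Injective x)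
    {l : Fin M → ℕ} (hl : Antitone l) :
    isoDivDiffs j (fun y => y 0 ^ M * chainSum (fun s => t (s + 1))
        (revPrefix (Function.update y 0 (t 1)) (j + 1)) l) x =
      chainSum t (revPrefix x (j + 1)) (l + 1) := by
  induction j generalizing x l with
  | zero =>
    simp only [isoDivDiffs, revPrefix, Function.update_self, chainSum_singleton,
      transferEntry_zero_left]
  | succ j ih =>
    have hl' : Antitone (l + 1) := hl.add_const 1
    have transfer_one : ∀ z : ℕ → K, Function.Injective z →
        isoDivDiffs j (fun y => y 0 ^ M * chainSum (fun s => t (s + 1))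
          (revPrefix (Function.update y 0 (t 1)) (j + 1 + 1)) l) z =
        transfer t 1 (z (j + 1)) (chainSum t (revPrefix z (j + 1))) (l + 1) := by
      intro z hz
      rw [transfer, sum_antitoneIcc_add_one, isoDivDiffs_congr (x := z) j (ψ := fun y =>
        ∑ μ ∈ antitoneIcc 0 l, transferEntry t (z (j + 1)) (μ + 1) (l + 1) *
          (y 0 ^ M * chainSum (fun s => t (s + 1))
            (revPrefix (Function.update y 0 (t 1)) (j + 1)) μ)), isoDivDiffs_sum_const_mul]
      · refine Finset.sum_congr rfl fun μ hμ => ?_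
        rw [ih hz (mem_antitoneIcc.1 hμ).2.2]
      · intro y hy
        rw [revPrefix, chainSum, transfer, Function.update_of_ne (by omega), hy (j + 1) (by omega),
          Finset.mul_sum]
        refine Finset.sum_congr rfl fun μ _ => ?_
        rw [transferEntry_shift]
        ring
    rw [isoDivDiffs, isoDivDiff, transfer_one x hx, transfer_one _ (adjSwap_injective hx),
      adjSwap_right, revPrefix, revPrefix, adjSwap_left, revPrefix_congr (x := adjSwap j x) (y := x)
        fun b hb => adjSwap_of_ne x (by omega) (by omega), div_eq_iff (sub_succ_ne_zero hx j)]
    have comm := transfer_one_comm t (x j) (x (j + 1)) (chainSum t (revPrefix x j)) hl'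
      fun c => Nat.succ_pos _
    have total := transfer_comm t (x j) (x (j + 1)) (chainSum t (revPrefix x j)) hl'
    rw [revPrefix, revPrefix]
    simp only [chainSum] at comm total ⊢
    linear_combination -comm + x (j + 1) * total

/-- The recursion shared by the generating functions of fans and of reduced subwords. -/
def fanPoly (k : ℕ) : ℕ → (ℕ → K) → K
  | 0, _ => 1
  | m + 1, x => divDiffs k (fun y => y 0 ^ (m + 1 + k) * fanPoly k m (fun b => y (b + 1))) x

/-- The staircase sequence `m, m - 1, …, 1`. -/
def staircase (m : ℕ) (c : Fin m) : ℕ := m - c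

theorem staircase_antitone (m : ℕ) : Antitone (staircase m) := fun _ _ h =>
  Nat.sub_le_sub_left h m

theorem staircase_succ (m : ℕ) :
    staircase (m + 1) = (Fin.snoc (staircase m) 0 : Fin (m + 1) → ℕ) + 1 := by
  funext c
  induction c using Fin.lastCases with
  | last => simp [staircase]
  | cast c => simp only [staircase, Pi.add_apply, Fin.snoc_castSucc, Pi.one_apply]; simp; omega

/-- The generating function of chains of `k + 1` steps from the empty sequence to the staircase. -/
noncomputable def staircaseSum (k m : ℕ) (x : ℕ → K) : K :=
  chainSum (fun s => x (k + s)) (revPrefix x (k + 1)) (staircase m)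

theorem staircaseSum_zero (k : ℕ) (x : ℕ → K) : staircaseSum k 0 x = 1 := by
  have empty : ∀ (t : ℕ → K) (xs : List K) (l : Fin 0 → ℕ), chainSum t xs l = 1 := by
    intro t xs l
    induction xs with
    | nil => simp [chainSum, Subsingleton.elim l 0]
    | cons y ys ih =>
      have : antitoneIcc 0 l = {l} := Finset.eq_singleton_iff_unique_mem.2
        ⟨mem_antitoneIcc.2 ⟨fun _ => Nat.zero_le _, le_rfl, Subsingleton.antitone l⟩,
          fun _ _ => Subsingleton.elim _ _⟩
      simp [chainSum, transfer, this, transferEntry, ih]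
  exact empty _ _ _

theorem staircaseSum_adjSwap (k m : ℕ) (x : ℕ → K) {i : ℕ} (hi : i + 1 < k) :
    staircaseSum k m (adjSwap i x) = staircaseSum k m x := by
  obtain ⟨d, hd⟩ := Nat.exists_eq_add_of_le (show i + 2 ≤ k + 1 by omega)
  have ht : (fun s => adjSwap i x (k + s)) = fun s => x (k + s) :=
    funext fun s => adjSwap_of_ne x (by omega) (by omega)
  rw [staircaseSum, staircaseSum, ht, hd]
  exact chainSum_perm _ (revPrefix_adjSwap_perm x i d) (staircase_antitone m)

theorem staircaseSum_shift_invariant (k m : ℕ) {i : ℕ} (hi : i + 1 < k) :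
    AdjInvariant (i + 1) (fun y : ℕ → K => staircaseSum k m fun b => y (b + 1)) := by
  intro y _
  have shift : (fun b => adjSwap (i + 1) y (b + 1)) = adjSwap i fun b => y (b + 1) := by
    funext b
    simp only [adjSwap, Equiv.swap_apply_def]
    congr 1
    split_ifs <;> omega
  simp only [shift, staircaseSum_adjSwap k m _ hi]

theorem staircaseSum_succ (k m : ℕ) {x : ℕ → K} (hx : Function.Injective x) :
    staircaseSum k (m + 1) x =
      divDiffs k (fun y => y 0 ^ (m + 1 + k) * staircaseSum k m (fun b => y (b + 1))) x := by
  have hl : Antitone (Fin.snoc (staircase m) 0 : Fin (m + 1) → ℕ) := by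
    have h := staircase_antitone (m + 1)
    rw [staircase_succ] at h
    exact fun c c' hc => Nat.le_of_add_le_add_right (h hc)
  rw [staircaseSum, staircase_succ, ← isoDivDiffs_chainSum _ k hx hl,
    ← isoDivDiffs_pow_mul (m + 1) k (fun i hi => staircaseSum_shift_invariant k m hi) x hx]
  refine isoDivDiffs_congr k fun y hy => ?_
  have ht : (fun s => x (k + (s + 1))) = fun s => y (k + s + 1) :=
    funext fun s => (hy _ (by omega)).symm
  rw [ht, ← hy (k + 1) k.lt_succ_self, chainSum_perm _ (revPrefix_update_perm y _ k) hl,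
    chainSum_snoc_zero]
  rfl

theorem staircaseSum_eq_fanPoly (k m : ℕ) {x : ℕ → K} (hx : Function.Injective x) :
    staircaseSum k m x = fanPoly k m x := by
  induction m generalizing x with
  | zero => exact staircaseSum_zero k x
  | succ m ih =>
    rw [staircaseSum_succ k m hx, fanPoly]
    exact divDiffs_congr (fun y hy => by rw [ih fun b c hbc => by simpa using hy hbc]) k x hx

end FanRecursion

/-! ### Fans as tuples of lattice paths -/

section FanExpansion

variable {K : Type*} [Field K] {M k m : ℕ}

open Classical in
/-- The weakly increasing tuples of weakly decreasing sequences, all bounded above by `l`. -/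
noncomputable def chainsBelow (k : ℕ) (l : Fin M → ℕ) : Finset (Fin k → Fin M → ℕ) :=
  {f ∈ Fintype.piFinset fun _ => antitoneIcc 0 l | Monotone f}

theorem mem_chainsBelow {l : Fin M → ℕ} {f : Fin k → Fin M → ℕ} :
    f ∈ chainsBelow k l ↔ (∀ i, f i ≤ l ∧ Antitone (f i)) ∧ Monotone f := by
  simp [chainsBelow, mem_antitoneIcc]

/-- A tuple of sequences, preceded by the zero sequence and followed by `l`. -/
def extendChain (f : Fin k → Fin M → ℕ) (l : Fin M → ℕ) : Fin (k + 2) → Fin M → ℕ :=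
  Fin.snoc (Fin.cons 0 f : Fin (k + 1) → Fin M → ℕ) l

@[simp]
theorem extendChain_zero (f : Fin k → Fin M → ℕ) (l : Fin M → ℕ) : extendChain f l 0 = 0 := by
  rw [extendChain, ← Fin.castSucc_zero, Fin.snoc_castSucc, Fin.cons_zero]

@[simp]
theorem extendChain_last (f : Fin k → Fin M → ℕ) (l : Fin M → ℕ) :
    extendChain f l (Fin.last (k + 1)) = l := Fin.snoc_last ..

theorem forall_extendChain {p : (Fin M → ℕ) → Prop} {f : Fin k → Fin M → ℕ} {l : Fin M → ℕ} :
    (∀ i, p (extendChain f l i)) ↔ p 0 ∧ (∀ i, p (f i)) ∧ p l := by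
  simp only [extendChain, Fin.forall_fin_succ' (n := k + 1), Fin.snoc_castSucc, Fin.snoc_last,
    Fin.forall_fin_succ, Fin.cons_zero, Fin.cons_succ, and_assoc]

theorem monotone_snoc {α : Type*} [Preorder α] {f : Fin k → α} {a : α} :
    Monotone (Fin.snoc f a : Fin (k + 1) → α) ↔ (∀ i, f i ≤ a) ∧ Monotone f := by
  simp only [Monotone, Fin.forall_fin_succ', Fin.snoc_castSucc, Fin.snoc_last,
    Fin.castSucc_le_castSucc_iff, le_refl, implies_true, Fin.le_last, true_implies, and_true,
    Fin.last_le_iff, Fin.castSucc_ne_last, false_implies]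
  exact ⟨fun h => ⟨fun c => (h c).2, fun c c' hc => (h c).1 c' hc⟩,
    fun h c => ⟨fun c' hc => h.2 hc, h.1 c⟩⟩

theorem extendChain_monotone {f : Fin k → Fin M → ℕ} {l : Fin M → ℕ} (hf : Monotone f)
    (hl : ∀ i, f i ≤ l) : Monotone (extendChain f l) := by
  refine monotone_snoc.2 ⟨Fin.cases (fun _ => Nat.zero_le _) hl, fun i j hij => ?_⟩
  cases i using Fin.cases with
  | zero => exact fun _ => Nat.zero_le _
  | succ i =>
    cases j using Fin.cases with
    | zero => exact absurd hij (by simp)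
    | succ j => exact hf (Fin.succ_le_succ_iff.1 hij)

theorem snoc_mem_chainsBelow {l μ : Fin M → ℕ} {f : Fin k → Fin M → ℕ} :
    (Fin.snoc f μ : Fin (k + 1) → Fin M → ℕ) ∈ chainsBelow (k + 1) l ↔
      μ ∈ antitoneIcc 0 l ∧ f ∈ chainsBelow k μ := by
  simp only [mem_chainsBelow, monotone_snoc, mem_antitoneIcc, Fin.forall_fin_succ',
    Fin.snoc_castSucc, Fin.snoc_last, Nat.zero_le, implies_true, true_and]
  exact ⟨fun h => ⟨h.1.2, fun i => ⟨h.2.1 i, (h.1.1 i).2⟩, h.2.2⟩,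
    fun h => ⟨⟨fun i => ⟨(h.2.1 i).1.trans h.1.1, (h.2.1 i).2⟩, h.1⟩, fun i => (h.2.1 i).1, h.2.2⟩⟩

theorem sum_chainsBelow_succ (l : Fin M → ℕ) (F : (Fin (k + 1) → Fin M → ℕ) → K) :
    ∑ f ∈ chainsBelow (k + 1) l, F f =
      ∑ μ ∈ antitoneIcc 0 l, ∑ f ∈ chainsBelow k μ, F (Fin.snoc f μ : Fin (k + 1) → _) := by
  rw [Finset.sum_sigma']
  refine Finset.sum_bij' (fun f _ => ⟨f (Fin.last k), Fin.init f⟩) (fun p _ => Fin.snoc p.2 p.1)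
    (fun f hf => ?_) (fun p hp => ?_) ?_ ?_ ?_
  · rw [← Fin.snoc_init_self f, snoc_mem_chainsBelow] at hf
    simpa using hf
  · exact snoc_mem_chainsBelow.2 (by simpa using hp)
  all_goals intros; simp

theorem chainSum_eq_sum_chainsBelow (t x : ℕ → K) (k : ℕ) (l : Fin M → ℕ) :
    chainSum t (revPrefix x (k + 1)) l = ∑ f ∈ chainsBelow k l, ∏ i : Fin (k + 1),
      transferEntry t (x i) (extendChain f l i.castSucc) (extendChain f l i.succ) := by
  induction k generalizing l with
  | zero =>
    have : chainsBelow 0 l = {fun i => i.elim0} := by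
      ext f; simp [mem_chainsBelow, Subsingleton.elim f (fun i => i.elim0), Subsingleton.monotone]
    rw [revPrefix, revPrefix, chainSum_singleton, this, Finset.sum_singleton]
    simp [extendChain, Fin.snoc]
  | succ k ih =>
    rw [revPrefix, chainSum, transfer, sum_chainsBelow_succ]
    refine Finset.sum_congr rfl fun μ _ => ?_
    rw [ih, Finset.mul_sum]
    refine Finset.sum_congr rfl fun f _ => ?_
    have ext_snoc : extendChain (Fin.snoc f μ : Fin (k + 1) → _) l =
        (Fin.snoc (extendChain f μ) l : Fin (k + 3) → _) := by
      rw [extendChain, extendChain, Fin.cons_snoc_eq_snoc_cons]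
    have top : extendChain f μ (Fin.last (k + 1)) = μ := by simp [extendChain]
    rw [Fin.prod_univ_castSucc (n := k + 1), mul_comm, ext_snoc]
    simp only [Fin.snoc_castSucc, Fin.succ_castSucc, Fin.succ_last, Fin.snoc_last, top,
      Fin.val_castSucc, Fin.val_last]

theorem prod_prod_Ioo {R : Type*} [CommMonoid R] (t : ℕ → R) {n : ℕ} {a : Fin (n + 1) → ℕ}
    (ha : Monotone a) :
    ∏ i : Fin n, ∏ s ∈ Finset.Ioo (a i.castSucc) (a i.succ), t s =
      ∏ s ∈ Finset.Ioo (a 0) (a (Fin.last n)) with ∀ i, a i ≠ s, t s := by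
  induction n with
  | zero => simp
  | succ n ih =>
    have ih' := ih (a := fun i => a i.castSucc) fun i j hij =>
      ha (Fin.castSucc_le_castSucc_iff.2 hij)
    have h0 : ∀ i, a 0 ≤ a i := fun i => ha (Fin.zero_le i)
    have hn : ∀ i : Fin (n + 1), a i.castSucc ≤ a (Fin.last n).castSucc := fun i =>
      ha (Fin.castSucc_le_castSucc_iff.2 (Fin.le_last i))
    have hlast : a (Fin.last n).castSucc ≤ a (Fin.last (n + 1)) := ha (Fin.le_last _)
    rw [Fin.prod_univ_castSucc]
    simp only [Fin.succ_castSucc, Fin.succ_last, Nat.succ_eq_add_one]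
    rw [ih', ← Finset.prod_union]
    · refine Finset.prod_congr (Finset.ext fun s => ?_) fun _ _ => rfl
      simp only [Finset.mem_union, Finset.mem_filter, Finset.mem_Ioo, Fin.forall_fin_succ',
        Fin.castSucc_zero]
      constructor
      · rintro (⟨⟨h₁, h₂⟩, h₃, h₄⟩ | ⟨h₁, h₂⟩)
        · exact ⟨⟨h₁, by omega⟩, ⟨h₃, h₄⟩, by omega⟩
        · exact ⟨⟨(h0 _).trans_lt h₁, h₂⟩,
            ⟨fun i => by have := hn i.castSucc; omega, by omega⟩, by omega⟩
      · rintro ⟨⟨h₁, h₂⟩, ⟨h₃, h₄⟩, _⟩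
        rcases lt_or_gt_of_ne h₄ with h | h
        · exact Or.inr ⟨h, h₂⟩
        · exact Or.inl ⟨⟨h₁, h⟩, h₃, h₄⟩
    · exact Finset.disjoint_left.2 fun s h₁ h₂ => by
        simp only [Finset.mem_filter, Finset.mem_Ioo] at h₁ h₂; omega

theorem jumpWeight_of_le (t : ℕ → K) (x : K) {a h : ℕ} (hah : a ≤ h) :
    jumpWeight t x a h = (if a ≠ h then x else 1) * ∏ s ∈ Finset.Ioo a h, t s := by
  rcases hah.eq_or_lt with rfl | hlt
  · simp [jumpWeight_self]
  · rw [jumpWeight_of_lt t x hlt, if_pos hlt.ne]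

theorem prod_transferEntry (t x : ℕ → K) {n : ℕ} {a : Fin (n + 1) → Fin M → ℕ} (ha : Monotone a) :
    ∏ i : Fin n, transferEntry t (x i) (a i.castSucc) (a i.succ) =
      (∏ i : Fin n, x i ^ Finset.card {c | a i.castSucc c ≠ a i.succ c}) *
        ∏ c, ∏ s ∈ Finset.Ioo (a 0 c) (a (Fin.last n) c) with ∀ i, a i c ≠ s, t s := by
  have column : ∀ c, Monotone fun i => a i c := fun c i j hij => ha hij c
  simp only [← prod_prod_Ioo t (column _)]
  rw [Finset.prod_comm, ← Finset.prod_mul_distrib]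
  refine Finset.prod_congr rfl fun i _ => ?_
  simp only [transferEntry, jumpWeight_of_le t _ (ha i.castSucc_lt_succ.le _)]
  rw [Finset.prod_mul_distrib, Finset.prod_ite, Finset.prod_const, Finset.prod_const_one, mul_one]

theorem prod_prod_eq_prod_pow_card {ι α R : Type*} [Fintype ι] [DecidableEq α] [CommMonoid R]
    {S : ι → Finset α} {U : Finset α} (hS : ∀ i, S i ⊆ U) (t : α → R) :
    ∏ i, ∏ s ∈ S i, t s = ∏ s ∈ U, t s ^ Finset.card {i | s ∈ S i} := by
  rw [Finset.prod_comm' (t' := U) (s' := fun s => {i | s ∈ S i})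
    (fun i s => by simpa using fun h => hS i h)]
  simp only [Finset.prod_const]

/-- The depths of the east steps of a tuple of lattice paths below the top boundary. -/
def depth (P : Fin k → Fin m → Fin (m + 1)) : Fin k → Fin m → ℕ := fun i j => m - P i j

variable {T B : Fin m → Fin (m + 1)}

theorem antitone_iff_forall_succ_le {α : Type*} [Preorder α] {P : Fin k → α} :
    Antitone P ↔ ∀ (i : Fin k) (hi : (i : ℕ) + 1 < k), P ⟨i + 1, hi⟩ ≤ P i := by
  cases k with
  | zero => simp [Subsingleton.antitone]
  | succ k =>
    rw [Fin.antitone_iff_succ_le]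
    exact ⟨fun h i hi => h ⟨i, by omega⟩, fun h i => h i.castSucc (by simp)⟩

theorem depth_mem_chainsBelow (hT : ∀ j, (T j : ℕ) = m) (hB : ∀ j, (B j : ℕ) = j)
    {P : Fin k → Fin m → Fin (m + 1)} :
    depth P ∈ chainsBelow k (staircase m) ↔ InPk T B P := by
  have le_iff : ∀ a b : Fin (m + 1), m - (a : ℕ) ≤ m - b ↔ b ≤ a := fun a b => by
    rw [Fin.le_def]; omega
  have path : ∀ i, depth P i ≤ staircase m ∧ Antitone (depth P i) ↔ InP T B (P i) := by
    intro i
    simp only [depth, Pi.le_def, staircase, InP, Antitone, Monotone, Fin.le_def, hT, hB]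
    exact ⟨fun h => ⟨fun a b hab => by have := h.2 hab; omega,
        fun j => by have := h.1 j; omega⟩,
      fun h => ⟨fun j => by have := h.2 j; omega, fun a b hab => by have := h.1 hab; omega⟩⟩
  have mono : Monotone (depth P) ↔ Antitone P := by
    simp only [Monotone, Antitone, depth, Pi.le_def, le_iff]
  rw [mem_chainsBelow, mono, antitone_iff_forall_succ_le]
  exact and_congr (forall_congr' path) Iff.rfl

theorem sum_chainsBelow_staircase [DecidablePred (InPk T B (k := k))] (hT : ∀ j, (T j : ℕ) = m)
    (hB : ∀ j, (B j : ℕ) = j) (F : (Fin k → Fin m → ℕ) → K) :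
    ∑ f ∈ chainsBelow k (staircase m), F f = ∑ P with InPk T B P, F (depth P) := by
  have depth_rev : ∀ f ∈ chainsBelow k (staircase m),
      depth (fun i j => ⟨m - f i j, by omega⟩) = f := fun f hf => by
    funext i j
    have := ((mem_chainsBelow.1 hf).1 i).1 j
    simp only [staircase] at this
    simp only [depth]
    omega
  refine Finset.sum_bij' (fun f _ i j => ⟨m - f i j, by omega⟩) (fun P _ => depth P)
    (fun f hf => ?_) (fun P hP => ?_) depth_rev (fun P _ => ?_) (fun f hf => ?_)
  · rw [Finset.mem_filter_univ, ← depth_mem_chainsBelow hT hB, depth_rev f hf]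
    exact hf
  · rwa [depth_mem_chainsBelow hT hB, ← Finset.mem_filter_univ (p := InPk T B)]
  · funext i j
    simp only [depth, Fin.ext_iff]
    omega
  · rw [depth_rev f hf]

theorem extendChain_depth (hT : ∀ j, (T j : ℕ) = m) (hB : ∀ j, (B j : ℕ) = j)
    (P : Fin k → Fin m → Fin (m + 1)) (i : Fin (k + 2)) (c : Fin m) :
    extendChain (depth P) (staircase m) i c = m - extP T B P i c := by
  induction i using Fin.lastCases with
  | last => simp [extendChain, extP, staircase, hB]
  | cast i =>
    rw [extendChain, Fin.snoc_castSucc]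
    induction i using Fin.cases with
    | zero => simp [extP, hT]
    | succ i => simp [extP, depth, i.isLt.ne]

/-- The exponent of the `i`-th variable in the monomial of a tuple of lattice paths: the
complement of a `hstat` for `i ≤ k`, a `ustat` for the following indices. -/
noncomputable def fanExponent (T B : Fin m → Fin (m + 1)) (P : Fin k → Fin m → Fin (m + 1))
    (i : ℕ) : ℕ :=
  if h : i < k + 1 then m - hstat T B P ⟨i, h⟩
  else if h : i - (k + 1) < m - 1 then ustat T B P ⟨i - (k + 1), h⟩ else 0

theorem card_extendChain_ne (hT : ∀ j, (T j : ℕ) = m) (hB : ∀ j, (B j : ℕ) = j)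
    (P : Fin k → Fin m → Fin (m + 1)) (i : Fin (k + 1)) :
    Finset.card {c | extendChain (depth P) (staircase m) i.castSucc c ≠
      extendChain (depth P) (staircase m) i.succ c} = fanExponent T B P i := by
  have iff_ext : ∀ a b : Fin (m + 1), m - (a : ℕ) = m - b ↔ a = b := fun a b => by omega
  simp only [extendChain_depth hT hB, ne_eq, iff_ext]
  rw [fanExponent, dif_pos i.isLt, hstat, Nat.card_eq_fintype_card, Fintype.card_subtype,
    Finset.filter_not, Finset.card_sdiff_of_subset (Finset.filter_subset _ _), Finset.card_fin]

theorem card_extendChain_avoiding (hT : ∀ j, (T j : ℕ) = m) (hB : ∀ j, (B j : ℕ) = j)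
    (P : Fin k → Fin m → Fin (m + 1)) {s : ℕ} (hs : s < m) :
    Finset.card {c : Fin m | 1 + s ∈ ({r ∈ Finset.Ioo 0 (staircase m c) |
      ∀ i, extendChain (depth P) (staircase m) i c ≠ r} : Finset ℕ)} =
        fanExponent T B P (k + 1 + s) := by
  have mem_iff : ∀ c : Fin m, 1 + s ∈ ({r ∈ Finset.Ioo 0 (staircase m c) |
      ∀ i, extendChain (depth P) (staircase m) i c ≠ r} : Finset ℕ) ↔
        (B c : ℕ) < m - (s + 1) ∧ m - (s + 1) < (T c : ℕ) ∧
          ∀ i : Fin k, (P i c : ℕ) ≠ m - (s + 1) := by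
    intro c
    rw [Finset.mem_filter, Finset.mem_Ioo, forall_extendChain (p := fun a => a c ≠ 1 + s)]
    simp only [depth, staircase, Pi.zero_apply, hT, hB]
    have flip : ∀ i, m - (P i c : ℕ) ≠ 1 + s ↔ (P i c : ℕ) ≠ m - (s + 1) := fun i => by omega
    simp only [flip]
    grind
  rw [fanExponent, dif_neg (by omega)]
  simp only [mem_iff, Nat.add_sub_cancel_left]
  split_ifs with h
  · rw [ustat, Nat.card_eq_fintype_card, Fintype.card_subtype]
  · exact Finset.card_eq_zero.2 (Finset.filter_eq_empty_iff.2 fun c _ => by omega)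

theorem staircaseSum_eq_sum_paths [DecidablePred (InPk T B (k := k))] (hT : ∀ j, (T j : ℕ) = m)
    (hB : ∀ j, (B j : ℕ) = j) (x : ℕ → K) :
    staircaseSum k m x =
      ∑ P : Fin k → Fin m → Fin (m + 1) with InPk T B P,
        ∏ i ∈ Finset.range (m + k + 1), x i ^ fanExponent T B P i := by
  rw [staircaseSum, chainSum_eq_sum_chainsBelow, sum_chainsBelow_staircase hT hB]
  refine Finset.sum_congr rfl fun P hP => ?_
  have hP' := mem_chainsBelow.1 ((depth_mem_chainsBelow hT hB).2 (Finset.mem_filter.1 hP).2)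
  rw [prod_transferEntry _ _ (extendChain_monotone hP'.2 fun i => (hP'.1 i).1),
    show m + k + 1 = k + 1 + m by omega, Finset.prod_range_add]
  simp only [card_extendChain_ne hT hB, extendChain_zero, extendChain_last, Pi.zero_apply]
  congr 1
  · exact Fin.prod_univ_eq_prod_range (fun i => x i ^ fanExponent T B P i) (k + 1)
  · rw [prod_prod_eq_prod_pow_card (U := Finset.Ico 1 (1 + m)) fun c s hs => ?_,
      Finset.prod_Ico_eq_prod_range, Nat.add_sub_cancel_left]
    · refine Finset.prod_congr rfl fun s hs => ?_
      rw [card_extendChain_avoiding hT hB P (Finset.mem_range.1 hs), add_assoc]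
    · simp only [Finset.mem_filter, Finset.mem_Ioo, staircase] at hs
      rw [Finset.mem_Ico]
      omega

end FanExpansion

/-! ### The nilCoxeter algebra -/

section NilCoxeter

variable {R A : Type*} [CommRing R] [Ring A] [Algebra R A] {u : ℕ → A}

/-- The defining relations of the nilCoxeter algebra of type `A`. -/
structure IsNilCoxeter (u : ℕ → A) : Prop where
  mul_self (a : ℕ) : u a * u a = 0
  commute {a b : ℕ} (h : a + 2 ≤ b) : Commute (u a) (u b)
  braid (a : ℕ) : u a * u (a + 1) * u a = u (a + 1) * u a * u (a + 1)

/-- The product `(1 + x u_a)(1 + x u_{a+1}) ⋯ (1 + x u_{a+l-1})`. -/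
def nilRow (u : ℕ → A) (x : R) : ℕ → ℕ → A
  | _, 0 => 1
  | a, l + 1 => (1 + x • u a) * nilRow u x (a + 1) l

/-- The product of the first `r` rows of the staircase of size `N`, the `i`-th row
`(1 + x_i u_i) ⋯ (1 + x_i u_{N-2})` standing to the left of the previous ones. -/
def nilRows (u : ℕ → A) (N : ℕ) (x : ℕ → R) : ℕ → A
  | 0 => 1
  | r + 1 => nilRow u (x r) r (N - 1 - r) * nilRows u N x r

namespace IsNilCoxeter

theorem one_sub_mul_one_add (hu : IsNilCoxeter u) (x : R) (a : ℕ) :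
    (1 - x • u a) * (1 + x • u a) = 1 := by
  have sq : (x • u a) * (x • u a) = 0 := by rw [smul_mul_smul, hu.mul_self, smul_zero]
  rw [sub_mul, one_mul, mul_add, mul_one, sq]
  abel

theorem nilRow_commute (hu : IsNilCoxeter u) (x : R) {b : ℕ} :
    ∀ l a, b + 2 ≤ a → Commute (nilRow u x a l) (u b)
  | 0, _, _ => Commute.one_left _
  | l + 1, _, h => (((Commute.one_left _).add_left ((hu.commute h).symm.smul_left x))).mul_left
      (nilRow_commute hu x l _ (by omega))

theorem nilRow_succ_left (hu : IsNilCoxeter u) (x : R) (a l : ℕ) :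
    nilRow u x (a + 1) l = (1 - x • u a) * nilRow u x a (l + 1) := by
  rw [nilRow, ← mul_assoc, hu.one_sub_mul_one_add, one_mul]

theorem yangBaxter_expand (hu : IsNilCoxeter u) (x y : R) (a : ℕ) :
    (1 + x • u a) * ((1 + x • u (a + 1)) * ((1 + y • u a) * (1 - x • u (a + 1)))) =
      1 + (x + y) • u a + (x * y) • (u (a + 1) * u a - u a * u (a + 1)) := by
  have sq₀ := hu.mul_self a
  have sq₁ := hu.mul_self (a + 1)
  have braid := hu.braid a
  have word_zero : u a * u (a + 1) * u a * u (a + 1) = 0 := by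
    rw [braid, mul_assoc, sq₁, mul_zero]
  have sq₀_mul : ∀ z, u a * (u a * z) = 0 := fun z => by rw [← mul_assoc, sq₀, zero_mul]
  rw [mul_assoc, mul_assoc] at word_zero braid
  simp only [mul_add, add_mul, mul_sub, smul_mul_assoc, mul_smul_comm, one_mul, mul_one,
    sq₀, sq₁, sq₀_mul, word_zero, braid, smul_zero, add_zero, smul_add, smul_sub]
  module

theorem nilRow_mul_one_add (hu : IsNilCoxeter u) (x y : R) (a l : ℕ) :
    nilRow u x (a + 1) (l + 1) * (1 + y • u a) =
      (1 + x • u (a + 1)) * ((1 + y • u a) * (1 - x • u (a + 1))) *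
        nilRow u x (a + 1) (l + 1) := by
  have comm : Commute (nilRow u x (a + 1 + 1) l) (1 + y • u a) :=
    (Commute.one_right _).add_right ((hu.nilRow_commute x l _ (by omega)).smul_right y)
  calc nilRow u x (a + 1) (l + 1) * (1 + y • u a)
      = (1 + x • u (a + 1)) * ((1 + y • u a) * nilRow u x (a + 1 + 1) l) := by
        rw [nilRow, mul_assoc, comm.eq]
    _ = _ := by rw [hu.nilRow_succ_left x (a + 1) l]; simp only [mul_assoc]

theorem nilRow_mul_nilRow (hu : IsNilCoxeter u) (x y : R) (a l : ℕ) :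
    nilRow u x a (l + 2) * nilRow u y a (l + 2) =
      (1 + (x + y) • u a + (x * y) • (u (a + 1) * u a - u a * u (a + 1))) *
        (nilRow u x (a + 1) (l + 1) * nilRow u y (a + 1) (l + 1)) := by
  calc nilRow u x a (l + 2) * nilRow u y a (l + 2)
      = (1 + x • u a) * (nilRow u x (a + 1) (l + 1) * (1 + y • u a)) *
          nilRow u y (a + 1) (l + 1) := by
        rw [nilRow, nilRow.eq_2 u y a (l + 1)]; simp only [mul_assoc]
    _ = _ := by rw [hu.nilRow_mul_one_add, ← hu.yangBaxter_expand]; simp only [mul_assoc]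

theorem nilRow_commute_nilRow (hu : IsNilCoxeter u) (x y : R) :
    ∀ l a, Commute (nilRow u x a l) (nilRow u y a l)
  | 0, _ => Commute.one_left _
  | 1, a => by
    simp only [nilRow, mul_one]
    exact (Commute.one_left _).add_left ((Commute.one_right _).add_right
      (((Commute.refl (u a)).smul_left x).smul_right y))
  | l + 2, a => by
    rw [Commute, SemiconjBy, hu.nilRow_mul_nilRow, hu.nilRow_mul_nilRow, add_comm y x,
      mul_comm y x, (nilRow_commute_nilRow hu x y (l + 1) (a + 1)).eq]

end IsNilCoxeter

theorem nilRows_adjSwap_of_le (u : ℕ → A) (N : ℕ) (x : ℕ → R) {i : ℕ} :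
    ∀ r ≤ i, nilRows u N (adjSwap i x) r = nilRows u N x r
  | 0, _ => rfl
  | r + 1, h => by
    rw [nilRows, nilRows, nilRows_adjSwap_of_le u N x r (by omega),
      adjSwap_of_ne x (by omega) (by omega)]

theorem IsNilCoxeter.nilRows_sub_adjSwap_two (hu : IsNilCoxeter u) {N i : ℕ} (hi : i + 2 ≤ N)
    (x : ℕ → R) :
    nilRows u N x (i + 2) - nilRows u N (adjSwap i x) (i + 2) =
      (x i - x (i + 1)) • (u i * nilRows u N x (i + 2)) := by
  obtain ⟨l, hl⟩ : ∃ l, N - 1 - i = l + 1 := ⟨N - 2 - i, by omega⟩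
  have hl' : N - 1 - (i + 1) = l := by omega
  have absorb : u i * (1 - x (i + 1) • u i) = u i := by
    rw [mul_sub, mul_smul_comm, hu.mul_self, smul_zero, sub_zero, mul_one]
  have rows := hu.nilRow_commute_nilRow (x i) (x (i + 1)) (l + 1) i
  set W := nilRow u (x i) i (l + 1) * nilRow u (x (i + 1)) i (l + 1) * nilRows u N x i with hW
  have at_x : nilRows u N x (i + 2) = (1 - x (i + 1) • u i) * W := by
    rw [hW, rows.eq, nilRows, nilRows, hl, hl', hu.nilRow_succ_left]
    simp only [mul_assoc]
  have at_swap : nilRows u N (adjSwap i x) (i + 2) = (1 - x i • u i) * W := by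
    rw [hW, nilRows, nilRows, hl, hl', hu.nilRow_succ_left, adjSwap_left, adjSwap_right,
      nilRows_adjSwap_of_le u N x i le_rfl]
    simp only [mul_assoc]
  rw [at_x, at_swap, ← mul_assoc (u i), absorb, ← sub_mul, ← smul_mul_assoc]
  congr 1
  module

theorem IsNilCoxeter.nilRows_sub_adjSwap (hu : IsNilCoxeter u) {N i : ℕ} (hi : i + 2 ≤ N)
    (x : ℕ → R) {r : ℕ} (hr : i + 2 ≤ r) :
    nilRows u N x r - nilRows u N (adjSwap i x) r =
      (x i - x (i + 1)) • (u i * nilRows u N x r) := by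
  induction r, hr using Nat.le_induction with
  | base => exact hu.nilRows_sub_adjSwap_two hi x
  | succ r hr ih =>
    rw [nilRows, nilRows, adjSwap_of_ne x (by omega) (by omega), ← mul_sub, ih, mul_smul_comm,
      ← mul_assoc, (hu.nilRow_commute (x r) (N - 1 - r) r (by omega)).eq, mul_assoc]

end NilCoxeter

/-! ### Pipe dreams of one-line words -/

section PipeDreams

variable {R : Type*} [CommRing R]

/-- The nilCoxeter operator `u_a` on functions of one-line words: it transports the value along
`s_a` when `w` has a descent at `a`, and kills it otherwise. -/
def descentOp (a : ℕ) : Module.End R ((ℕ → ℕ) → R) where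
  toFun f w := if w (a + 1) < w a then f (adjSwap a w) else 0
  map_add' f g := by funext w; simp only [Pi.add_apply]; split_ifs <;> simp
  map_smul' c f := by funext w; simp only [Pi.smul_apply, RingHom.id_apply]; split_ifs <;> simp

theorem descentOp_apply (a : ℕ) (f : (ℕ → ℕ) → R) (w : ℕ → ℕ) :
    descentOp a f w = if w (a + 1) < w a then f (adjSwap a w) else 0 := rfl

theorem adjSwap_braid {A : Type*} (a : ℕ) (w : ℕ → A) :
    adjSwap a (adjSwap (a + 1) (adjSwap a w)) =
      adjSwap (a + 1) (adjSwap a (adjSwap (a + 1) w)) := by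
  funext b
  simp only [adjSwap, Equiv.swap_apply_def]
  congr 1
  split_ifs <;> omega

theorem isNilCoxeter_descentOp : IsNilCoxeter (descentOp (R := R)) where
  mul_self a := by
    ext f w
    simp only [Module.End.mul_apply, descentOp_apply, adjSwap_left, adjSwap_right,
      LinearMap.zero_apply, Pi.zero_apply]
    split_ifs <;> first | rfl | omega
  commute {a b} h := by
    ext f w
    simp only [Module.End.mul_apply, descentOp_apply]
    rw [adjSwap_of_ne w (by omega : b + 1 ≠ a) (by omega),
      adjSwap_of_ne w (by omega : b ≠ a) (by omega),
      adjSwap_of_ne w (by omega : a + 1 ≠ b) (by omega),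
      adjSwap_of_ne w (by omega : a ≠ b) (by omega), adjSwap_comm w h]
    split_ifs <;> rfl
  braid a := by
    ext f w
    have fix_right : ∀ v : ℕ → ℕ, adjSwap a v (a + 1 + 1) = v (a + 1 + 1) := fun v =>
      adjSwap_of_ne v (by omega) (by omega)
    have fix_left : ∀ v : ℕ → ℕ, adjSwap (a + 1) v a = v a := fun v =>
      adjSwap_of_ne v (by omega) (by omega)
    simp only [Module.End.mul_apply, descentOp_apply, adjSwap_left, adjSwap_right, fix_right,
      fix_left]
    rw [adjSwap_braid]
    split_ifs <;> rfl

open Classical in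
/-- The indicator function of the identity word. -/
noncomputable def idIndicator (w : ℕ → ℕ) : R := if w = id then 1 else 0

theorem nilRow_descentOp_succ (x : R) (a l : ℕ) (f : (ℕ → ℕ) → R) (w : ℕ → ℕ) :
    nilRow descentOp x a (l + 1) f w = nilRow descentOp x (a + 1) l f w +
      x * if w (a + 1) < w a then nilRow descentOp x (a + 1) l f (adjSwap a w) else 0 := by
  simp only [nilRow, Module.End.mul_apply, LinearMap.add_apply, LinearMap.smul_apply,
    Module.End.one_apply, Pi.add_apply, Pi.smul_apply, descentOp_apply, smul_eq_mul]

/-- The generating function of the reduced subwords, with product `w`, of the staircase word of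
size `N`; up to the convention for `w` this is a Schubert polynomial. -/
noncomputable def pipeDreamPoly (N : ℕ) (x : ℕ → R) (w : ℕ → ℕ) : R :=
  nilRows descentOp N x (N - 1) idIndicator w

theorem pipeDreamPoly_sub_adjSwap {N i : ℕ} (hi : i + 3 ≤ N) (x : ℕ → R) {w : ℕ → ℕ}
    (hw : w (i + 1) < w i) :
    pipeDreamPoly N x w - pipeDreamPoly N (adjSwap i x) w =
      (x i - x (i + 1)) * pipeDreamPoly N x (adjSwap i w) := by
  have key := congrFun (LinearMap.congr_fun ((isNilCoxeter_descentOp (R := R)).nilRows_sub_adjSwap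
    (N := N) (by omega) x (by omega : i + 2 ≤ N - 1)) idIndicator) w
  unfold pipeDreamPoly
  simpa only [LinearMap.sub_apply, Pi.sub_apply, LinearMap.smul_apply, Pi.smul_apply,
    Module.End.mul_apply, descentOp_apply, if_pos hw, smul_eq_mul] using key

theorem nilRow_descentOp_apply_id (x : R) (f : (ℕ → ℕ) → R) :
    ∀ l a, nilRow descentOp x a l f id = f id
  | 0, _ => rfl
  | l + 1, a => by
    rw [nilRow_descentOp_succ, nilRow_descentOp_apply_id x f l, if_neg (by simp), mul_zero,
      add_zero]

theorem pipeDreamPoly_id (N : ℕ) (x : ℕ → R) : pipeDreamPoly N x id = 1 := by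
  have rows : ∀ r, nilRows descentOp N x r idIndicator id = (1 : R) := by
    intro r
    induction r with
    | zero => exact if_pos rfl
    | succ r ih => rw [nilRows, Module.End.mul_apply, nilRow_descentOp_apply_id, ih]
  exact rows _

/-- The one-line word `w`, preceded by the new value `N - 1`. -/
def prependTop (N : ℕ) (w : ℕ → ℕ) : ℕ → ℕ
  | 0 => N - 1
  | b + 1 => if w b < N - 1 then w b else w b + 1

theorem adjSwap_prependTop (N a : ℕ) (w : ℕ → ℕ) :
    adjSwap (a + 1) (prependTop N w) = prependTop N (adjSwap a w) := by
  funext b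
  cases b with
  | zero => rw [adjSwap_of_ne _ (by omega) (by omega)]; rfl
  | succ b =>
    rcases eq_or_ne b a with rfl | h₁
    · rw [adjSwap_left]; simp only [prependTop, adjSwap_left]
    · rcases eq_or_ne b (a + 1) with rfl | h₂
      · rw [adjSwap_right]; simp only [prependTop, adjSwap_right]
      · rw [adjSwap_of_ne _ (by omega) (by omega)]; simp only [prependTop, adjSwap_of_ne _ h₁ h₂]

theorem nilRow_prependTop (N : ℕ) (x : R) (f : (ℕ → ℕ) → R) :
    ∀ l a, (fun w => nilRow descentOp x (a + 1) l f (prependTop N w)) =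
      nilRow descentOp x a l fun w => f (prependTop N w)
  | 0, _ => rfl
  | l + 1, a => by
    funext w
    have descent : prependTop N w (a + 1 + 1) < prependTop N w (a + 1) ↔ w (a + 1) < w a := by
      simp only [prependTop]; split_ifs <;> omega
    rw [nilRow_descentOp_succ, nilRow_descentOp_succ, ← nilRow_prependTop N x f l (a + 1)]
    simp only [descent, adjSwap_prependTop]

theorem nilRows_prependTop (N : ℕ) (x : ℕ → R) (f : (ℕ → ℕ) → R) :
    ∀ r, (fun w => nilRows descentOp (N + 1) x (r + 1) f (prependTop (N + 1) w)) =
      nilRows descentOp N (fun b => x (b + 1)) r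
        fun w => nilRow descentOp (x 0) 0 N f (prependTop (N + 1) w)
  | 0 => rfl
  | r + 1 => by
    rw [nilRows, Module.End.mul_apply, nilRow_prependTop, nilRows_prependTop N x f r, nilRows,
      Module.End.mul_apply, show N + 1 - 1 - (r + 1) = N - 1 - r by omega]

/-- The one-line word moving the value `a + l` to position `a`. -/
def cycleTo (a l b : ℕ) : ℕ :=
  if b < a then b else if b = a then a + l else if b ≤ a + l then b - 1 else b

theorem adjSwap_cycleTo (a l : ℕ) : adjSwap a (cycleTo (a + 1) l) = cycleTo a (l + 1) := by
  funext b
  rcases eq_or_ne b a with rfl | h₁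
  · rw [adjSwap_left]; unfold cycleTo; split_ifs <;> omega
  · rcases eq_or_ne b (a + 1) with rfl | h₂
    · rw [adjSwap_right]; unfold cycleTo; split_ifs <;> omega
    · rw [adjSwap_of_ne _ h₁ h₂]; unfold cycleTo; split_ifs <;> omega

theorem nilRow_idIndicator_of_ne (x : R) {b : ℕ} :
    ∀ l a (v : ℕ → ℕ), b < a → v b ≠ b → nilRow descentOp x a l idIndicator v = (0 : R)
  | 0, _, v, _, hv => if_neg fun h => hv (congrFun h b)
  | l + 1, a, v, hb, hv => by
    rw [nilRow_descentOp_succ, nilRow_idIndicator_of_ne x l (a + 1) v (hb.trans a.lt_succ_self) hv,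
      nilRow_idIndicator_of_ne x l (a + 1) (adjSwap a v) (hb.trans a.lt_succ_self)
        (by rwa [adjSwap_of_ne v hb.ne (by omega)]), ite_self, mul_zero, add_zero]

open Classical in
theorem nilRow_idIndicator_eq_pow (x : R) :
    ∀ l a (v : ℕ → ℕ), v a = a + l →
      nilRow descentOp x a l idIndicator v = if v = cycleTo a l then x ^ l else (0 : R)
  | 0, a, v, _ => by
    have cycle_id : cycleTo a 0 = id := by
      funext b; unfold cycleTo; simp only [id]; split_ifs <;> omega
    rw [cycle_id, pow_zero]
    rfl
  | l + 1, a, v, hv => by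
    rw [nilRow_descentOp_succ, nilRow_idIndicator_of_ne x l (a + 1) v a.lt_succ_self (by omega),
      nilRow_idIndicator_eq_pow x l (a + 1) (adjSwap a v) (by rw [adjSwap_right]; omega), zero_add]
    have cycle_iff : adjSwap a v = cycleTo (a + 1) l ↔ v = cycleTo a (l + 1) := by
      rw [← adjSwap_cycleTo]
      exact ⟨fun h => by rw [← h, adjSwap_adjSwap], fun h => by rw [h, adjSwap_adjSwap]⟩
    rw [cycle_iff]
    split_ifs with hdesc hcyc hcyc
    · rw [pow_succ']
    · rw [mul_zero]
    · exact absurd (by rw [hcyc]; unfold cycleTo; split_ifs <;> omega) hdesc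
    · rw [mul_zero]

theorem prependTop_eq_cycleTo {N : ℕ} {w : ℕ → ℕ} :
    prependTop (N + 1) w = cycleTo 0 N ↔ w = id := by
  constructor
  · intro h
    funext b
    have := congrFun h (b + 1)
    simp only [prependTop, cycleTo, id] at this ⊢
    split_ifs at this <;> omega
  · rintro rfl
    funext b
    cases b with
    | zero => simp [prependTop, cycleTo]
    | succ b => simp only [prependTop, cycleTo, id]; split_ifs <;> first | omega | contradiction

open Classical in
theorem pipeDreamPoly_prependTop {N : ℕ} (hN : 1 ≤ N) (x : ℕ → R) (w : ℕ → ℕ) :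
    pipeDreamPoly (N + 1) x (prependTop (N + 1) w) =
      x 0 ^ N * pipeDreamPoly N (fun b => x (b + 1)) w := by
  have first_row : (fun w => nilRow descentOp (x 0) 0 N idIndicator (prependTop (N + 1) w)) =
      x 0 ^ N • (idIndicator : (ℕ → ℕ) → R) := by
    funext v
    rw [nilRow_idIndicator_eq_pow (x 0) N 0 _ (by simp [prependTop]), Pi.smul_apply, idIndicator]
    simp only [smul_eq_mul, mul_ite, mul_one, mul_zero]
    exact if_congr prependTop_eq_cycleTo rfl rfl
  have rows := congrFun (nilRows_prependTop N x idIndicator (N - 1)) w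
  rw [first_row, map_smul, Nat.sub_add_cancel hN] at rows
  exact rows

/-- The one-line word `0, …, k - 1, N - 1, N - 2, …, k`, with its largest value moved from position
`k` to position `j`. -/
def reverseAbove (N k j b : ℕ) : ℕ :=
  if b < j then b else if b = j then N - 1 else if b ≤ k then b - 1
  else if b < N then N - 1 + k - b else b

theorem adjSwap_reverseAbove {N k j : ℕ} (hj : j < k) (hN : k + 2 ≤ N) :
    adjSwap j (reverseAbove N k j) = reverseAbove N k (j + 1) := by
  funext b
  rcases eq_or_ne b j with rfl | h₁
  · rw [adjSwap_left]; unfold reverseAbove; split_ifs <;> omega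
  · rcases eq_or_ne b (j + 1) with rfl | h₂
    · rw [adjSwap_right]; unfold reverseAbove; split_ifs <;> omega
    · rw [adjSwap_of_ne _ h₁ h₂]; unfold reverseAbove; split_ifs <;> omega

theorem reverseAbove_eq_prependTop (N k : ℕ) (hN : k + 1 ≤ N) :
    reverseAbove (N + 1) k 0 = prependTop (N + 1) (reverseAbove N k k) := by
  funext b
  cases b with
  | zero => simp [reverseAbove, prependTop]
  | succ b =>
    simp only [reverseAbove, prependTop]
    split_ifs <;> first | omega | contradiction

variable {K : Type*} [Field K]

theorem pipeDreamPoly_reverseAbove {N k : ℕ} (hN : k + 2 ≤ N) :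
    ∀ j ≤ k, ∀ x : ℕ → K, Function.Injective x →
      pipeDreamPoly N x (reverseAbove N k j) =
        divDiffs j (fun x => pipeDreamPoly N x (reverseAbove N k 0)) x
  | 0, _, _, _ => rfl
  | j + 1, hj, x, hx => by
    have ih := pipeDreamPoly_reverseAbove hN j (by omega)
    rw [divDiffs, divDiff, ← ih x hx, ← ih _ (adjSwap_injective hx),
      pipeDreamPoly_sub_adjSwap (by omega) x (by unfold reverseAbove; split_ifs <;> omega),
      adjSwap_reverseAbove (by omega) hN, mul_div_cancel_left₀ _ (sub_succ_ne_zero hx j)]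

theorem pipeDreamPoly_eq_fanPoly (k m : ℕ) {x : ℕ → K} (hx : Function.Injective x) :
    pipeDreamPoly (m + k + 1) x (reverseAbove (m + k + 1) k k) = fanPoly k m x := by
  induction m generalizing x with
  | zero =>
    have word_id : reverseAbove (0 + k + 1) k k = id := by
      funext b; unfold reverseAbove; simp only [id]; split_ifs <;> omega
    rw [word_id, pipeDreamPoly_id, fanPoly]
  | succ m ih =>
    rw [pipeDreamPoly_reverseAbove (by omega) k le_rfl x hx, fanPoly]
    refine divDiffs_congr (fun y hy => ?_) k x hx
    rw [show m + 1 + k + 1 = m + k + 1 + 1 by omega, reverseAbove_eq_prependTop _ _ (by omega),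
      pipeDreamPoly_prependTop (by omega), ih fun b c hbc => by simpa using hy hbc,
      show m + 1 + k = m + k + 1 by omega]

end PipeDreams

/-! ### Reduced subwords and the rank criterion -/

section Subwords

/-- The first `r` rows of the staircase `{(i, j) | i + j + 2 ≤ N}`, read row by row, last row
first; the cell `(i, j)` stands for the adjacent transposition `s_{i+j}`. -/
def staircaseWord (N : ℕ) : ℕ → List (ℕ × ℕ)
  | 0 => []
  | r + 1 => (List.range' 0 (N - 1 - r)).map (Prod.mk r) ++ staircaseWord N r

theorem mem_staircaseWord {N : ℕ} {c : ℕ × ℕ} :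
    ∀ {r}, c ∈ staircaseWord N r ↔ c.1 < r ∧ c.1 + c.2 + 2 ≤ N
  | 0 => by simp [staircaseWord]
  | r + 1 => by
    have mem_row : c ∈ (List.range' 0 (N - 1 - r)).map (Prod.mk r) ↔
        c.1 = r ∧ c.2 < N - 1 - r := by
      simp only [List.mem_map, List.mem_range'_1, Prod.ext_iff]
      exact ⟨by rintro ⟨j, hj, rfl, rfl⟩; omega, fun h => ⟨c.2, by omega, h.1.symm, rfl⟩⟩
    rw [staircaseWord, List.mem_append, mem_row, mem_staircaseWord]
    omega

theorem nodup_staircaseWord (N : ℕ) : ∀ r, (staircaseWord N r).Nodup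
  | 0 => List.nodup_nil
  | r + 1 => by
    refine List.Nodup.append (List.Nodup.map (Prod.mk_right_injective r) List.nodup_range')
      (nodup_staircaseWord N r) fun c hc hc' => ?_
    obtain ⟨j, -, rfl⟩ := List.mem_map.1 hc
    exact absurd (mem_staircaseWord.1 hc').1 (lt_irrefl r)

/-- The cells of `L` lying in `S` spell a reduced word for the permutation `w`. -/
def IsReducedSubword (S : Finset (ℕ × ℕ)) : List (ℕ × ℕ) → (ℕ → ℕ) → Prop
  | [], w => w = id
  | c :: L, w =>
    (c ∈ S ∧ w (c.1 + c.2 + 1) < w (c.1 + c.2) ∧ IsReducedSubword S L (adjSwap (c.1 + c.2) w)) ∨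
      (c ∉ S ∧ IsReducedSubword S L w)

theorem isReducedSubword_congr {S S' : Finset (ℕ × ℕ)} :
    ∀ {L : List (ℕ × ℕ)} {w : ℕ → ℕ}, (∀ c ∈ L, c ∈ S ↔ c ∈ S') →
      (IsReducedSubword S L w ↔ IsReducedSubword S' L w)
  | [], _, _ => Iff.rfl
  | c :: L, w, h => by
    have tail : ∀ w, IsReducedSubword S L w ↔ IsReducedSubword S' L w := fun w =>
      isReducedSubword_congr fun d hd => h d (List.mem_cons_of_mem c hd)
    simp only [IsReducedSubword, h c List.mem_cons_self, tail]

theorem isReducedSubword_cons_insert {S : Finset (ℕ × ℕ)} {c : ℕ × ℕ} {L : List (ℕ × ℕ)}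
    (hc : c ∉ L) (w : ℕ → ℕ) :
    IsReducedSubword (insert c S) (c :: L) w ↔
      w (c.1 + c.2 + 1) < w (c.1 + c.2) ∧ IsReducedSubword S L (adjSwap (c.1 + c.2) w) := by
  rw [IsReducedSubword, isReducedSubword_congr (S := insert c S) (S' := S) fun d hd => by
    simp [ne_of_mem_of_not_mem hd hc]]
  simp

section GeneratingFunction

variable {R : Type*} [CommRing R]

/-- The product of the operators `1 + x_i u_{i+j}` over the cells `(i, j)` of a word. -/
def wordOp (x : ℕ → R) (L : List (ℕ × ℕ)) : Module.End R ((ℕ → ℕ) → R) :=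
  (L.map fun c => 1 + x c.1 • descentOp (c.1 + c.2)).prod

theorem wordOp_row (x : ℕ → R) (r : ℕ) :
    ∀ l j, wordOp x ((List.range' j l).map (Prod.mk r)) = nilRow descentOp (x r) (r + j) l
  | 0, _ => rfl
  | l + 1, j => by
    rw [List.range'_succ, List.map_cons, wordOp, List.map_cons, List.prod_cons, nilRow, add_assoc,
      ← wordOp_row x r l (j + 1)]
    rfl

theorem wordOp_staircaseWord (N : ℕ) (x : ℕ → R) :
    ∀ r, wordOp x (staircaseWord N r) = nilRows descentOp N x r
  | 0 => rfl
  | r + 1 => by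
    rw [staircaseWord, wordOp, List.map_append, List.prod_append, nilRows]
    exact congrArg₂ _ (wordOp_row x r _ 0) (wordOp_staircaseWord N x r)

open Classical in
theorem wordOp_idIndicator (x : ℕ → R) :
    ∀ L : List (ℕ × ℕ), L.Nodup → ∀ w : ℕ → ℕ, wordOp x L idIndicator w =
      ∑ S ∈ L.toFinset.powerset with IsReducedSubword S L w, ∏ c ∈ S, x c.1
  | [], _, w => by
    rw [List.toFinset_nil, Finset.powerset_empty, Finset.sum_filter, Finset.sum_singleton,
      Finset.prod_empty]
    rfl
  | c :: L, hL, w => by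
    obtain ⟨hc, hL⟩ := List.nodup_cons.1 hL
    have hc' : c ∉ L.toFinset := by rwa [List.mem_toFinset]
    have not_mem : ∀ {S}, S ∈ L.toFinset.powerset → c ∉ S := fun hS h =>
      hc' (Finset.mem_powerset.1 hS h)
    have step : wordOp x (c :: L) idIndicator w = wordOp x L idIndicator w +
        x c.1 * if w (c.1 + c.2 + 1) < w (c.1 + c.2) then
          wordOp x L idIndicator (adjSwap (c.1 + c.2) w) else 0 := by
      simp only [wordOp, List.map_cons, List.prod_cons, Module.End.mul_apply, LinearMap.add_apply,
        LinearMap.smul_apply, Module.End.one_apply, Pi.add_apply, Pi.smul_apply, descentOp_apply,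
        smul_eq_mul]
    rw [step, wordOp_idIndicator x L hL, wordOp_idIndicator x L hL, Finset.sum_filter,
      Finset.sum_filter, Finset.sum_filter, List.toFinset_cons, Finset.sum_powerset_insert hc']
    congr 1
    · refine Finset.sum_congr rfl fun S hS => ?_
      simp only [IsReducedSubword, not_mem hS, false_and, not_false_eq_true, true_and, false_or]
    · simp only [isReducedSubword_cons_insert hc]
      by_cases hdesc : w (c.1 + c.2 + 1) < w (c.1 + c.2)
      · simp only [hdesc, true_and, if_true, Finset.mul_sum, mul_ite, mul_zero]
        exact Finset.sum_congr rfl fun S hS => by rw [Finset.prod_insert (not_mem hS)]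
      · simp only [hdesc, false_and, if_false, Finset.sum_const_zero, mul_zero]

open Classical in
theorem pipeDreamPoly_eq_sum (N : ℕ) (x : ℕ → R) (w : ℕ → ℕ) :
    pipeDreamPoly N x w = ∑ S ∈ (staircaseWord N (N - 1)).toFinset.powerset with
      IsReducedSubword S (staircaseWord N (N - 1)) w, ∏ c ∈ S, x c.1 := by
  rw [pipeDreamPoly, ← wordOp_staircaseWord,
    wordOp_idIndicator x _ (nodup_staircaseWord N (N - 1))]

end GeneratingFunction

/-- The number of positions `b < q` with `w b < p`. -/
def wordRank (w : ℕ → ℕ) (p q : ℕ) : ℕ := Nat.count (fun b => w b < p) q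

theorem wordRank_succ (w : ℕ → ℕ) (p q : ℕ) :
    wordRank w p (q + 1) = wordRank w p q + if w q < p then 1 else 0 := Nat.count_succ _ _

theorem wordRank_adjSwap_of_ne (w : ℕ → ℕ) (p : ℕ) {a : ℕ} :
    ∀ {q}, q ≠ a + 1 → wordRank (adjSwap a w) p q = wordRank w p q
  | 0, _ => rfl
  | 1, h => by simp only [wordRank_succ, adjSwap_of_ne w (by omega : 0 ≠ a) (by omega)]; rfl
  | q + 2, h => by
    by_cases hq : q = a
    · subst hq
      simp only [wordRank_succ, adjSwap_left, adjSwap_right,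
        wordRank_adjSwap_of_ne w p (by omega : q ≠ q + 1)]
      omega
    · rw [wordRank_succ, wordRank_succ w, adjSwap_of_ne w (by omega : q + 1 ≠ a) (by omega),
        wordRank_adjSwap_of_ne w p (by omega)]

theorem wordRank_eq_max {w : ℕ → ℕ} {a : ℕ} (h : w (a + 1) < w a) (p : ℕ) :
    wordRank w p (a + 1) = max (wordRank w p a) (wordRank w p (a + 2) - 1) := by
  rw [wordRank_succ w p (a + 1), wordRank_succ]
  split_ifs <;> omega

theorem wordRank_eq_min {w : ℕ → ℕ} {a : ℕ} (h : w a ≤ w (a + 1)) (p : ℕ) :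
    wordRank w p (a + 1) = min (wordRank w p a + 1) (wordRank w p (a + 2)) := by
  rw [wordRank_succ w p (a + 1), wordRank_succ]
  split_ifs <;> omega

theorem wordRank_adjSwap_eq_min {w : ℕ → ℕ} {a : ℕ} (h : w (a + 1) < w a) (p : ℕ) :
    wordRank (adjSwap a w) p (a + 1) = min (wordRank w p a + 1) (wordRank w p (a + 2)) := by
  rw [wordRank_eq_min (by rw [adjSwap_left, adjSwap_right]; exact h.le),
    wordRank_adjSwap_of_ne w p (by omega), wordRank_adjSwap_of_ne w p (by omega)]

theorem wordRank_id (p : ℕ) : ∀ q, wordRank id p q = min p q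
  | 0 => (Nat.min_zero p).symm
  | q + 1 => by rw [wordRank_succ, wordRank_id p q]; simp only [id]; split_ifs <;> omega

theorem eq_id_of_min_le_wordRank {w : ℕ → ℕ} (hw : Function.Injective w)
    (h : ∀ p q, min p q ≤ wordRank w p q) : w = id := by
  have le_self : ∀ b, w b ≤ b := fun b => by
    have full : Nat.count (fun c => w c < b + 1) (b + 1) = b + 1 :=
      le_antisymm (Nat.count_le _) (by simpa [wordRank] using h (b + 1) (b + 1))
    exact Nat.lt_succ_iff.1 (Nat.count_iff_forall.1 full b b.lt_succ_self)
  funext b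
  induction b using Nat.strong_induction_on with
  | _ b ih =>
    by_contra hb
    have hlt : w b < b := lt_of_le_of_ne (le_self b) hb
    exact hlt.ne (hw (ih (w b) hlt))

open Classical in
/-- The rank function of the Demazure product of the cells of `L` lying in `S`. -/
noncomputable def demazureRank (S : Finset (ℕ × ℕ)) (p : ℕ) : List (ℕ × ℕ) → ℕ → ℕ
  | [], q => min p q
  | c :: L, q =>
    if q = c.1 + c.2 + 1 ∧ c ∈ S then
      max (demazureRank S p L (c.1 + c.2)) (demazureRank S p L (c.1 + c.2 + 2) - 1)
    else demazureRank S p L q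

theorem demazureRank_succ (S : Finset (ℕ × ℕ)) (p : ℕ) : ∀ (L : List (ℕ × ℕ)) q,
    demazureRank S p L q ≤ demazureRank S p L (q + 1) ∧
      demazureRank S p L (q + 1) ≤ demazureRank S p L q + 1
  | [], q => by simp only [demazureRank]; omega
  | c :: L, q => by
    have at_q := demazureRank_succ S p L q
    have at_cell := demazureRank_succ S p L (c.1 + c.2)
    have after_cell := demazureRank_succ S p L (c.1 + c.2 + 1)
    have two : c.1 + c.2 + 1 + 1 = c.1 + c.2 + 2 := rfl
    rw [two] at after_cell
    simp only [demazureRank]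
    split_ifs with h₁ h₂ h₂
    · omega
    · rw [h₁.1, two]
      omega
    · obtain rfl : q = c.1 + c.2 := by omega
      omega
    · exact at_q

theorem demazureRank_mono (S : Finset (ℕ × ℕ)) (p : ℕ) (L : List (ℕ × ℕ)) :
    Monotone (demazureRank S p L) :=
  monotone_nat_of_le_succ fun q => (demazureRank_succ S p L q).1

theorem demazureRank_add_le (S : Finset (ℕ × ℕ)) (p : ℕ) (L : List (ℕ × ℕ)) (q : ℕ) :
    ∀ t, demazureRank S p L (q + t) ≤ demazureRank S p L q + t
  | 0 => le_rfl
  | t + 1 => (demazureRank_succ S p L (q + t)).2.trans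
      (Nat.succ_le_succ (demazureRank_add_le S p L q t))

theorem demazureRank_le (S : Finset (ℕ × ℕ)) (p : ℕ) :
    ∀ (L : List (ℕ × ℕ)) q, demazureRank S p L q ≤ min p q
  | [], _ => le_rfl
  | c :: L, q => by
    have at_q := demazureRank_le S p L q
    have at_cell := demazureRank_le S p L (c.1 + c.2)
    have after_cell := demazureRank_le S p L (c.1 + c.2 + 2)
    simp only [demazureRank]
    split_ifs <;> omega

theorem exists_isReducedSubword_cons {S : Finset (ℕ × ℕ)} {c : ℕ × ℕ} {L : List (ℕ × ℕ)}
    (hc : c ∉ L) (w : ℕ → ℕ) :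
    (∃ S' ⊆ S, IsReducedSubword S' (c :: L) w) ↔
      (∃ S' ⊆ S, IsReducedSubword S' L w) ∨ (c ∈ S ∧ w (c.1 + c.2 + 1) < w (c.1 + c.2) ∧
        ∃ S' ⊆ S, IsReducedSubword S' L (adjSwap (c.1 + c.2) w)) := by
  constructor
  · rintro ⟨S', hS, ⟨hcS, hdesc, h⟩ | ⟨-, h⟩⟩
    · exact Or.inr ⟨hS hcS, hdesc, S', hS, h⟩
    · exact Or.inl ⟨S', hS, h⟩
  · rintro (⟨S', hS, h⟩ | ⟨hcS, hdesc, S', hS, h⟩)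
    · refine ⟨S'.erase c, (S'.erase_subset c).trans hS, Or.inr ⟨S'.notMem_erase c, ?_⟩⟩
      rwa [isReducedSubword_congr (S' := S') fun d hd => by
        simp [ne_of_mem_of_not_mem hd hc]]
    · exact ⟨insert c S', Finset.insert_subset hcS hS,
        (isReducedSubword_cons_insert hc w).2 ⟨hdesc, h⟩⟩

theorem demazureRank_cons_of_ne {S : Finset (ℕ × ℕ)} {c : ℕ × ℕ} {q : ℕ}
    (h : ¬(q = c.1 + c.2 + 1 ∧ c ∈ S)) (p : ℕ) (L : List (ℕ × ℕ)) :
    demazureRank S p (c :: L) q = demazureRank S p L q := if_neg h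

theorem demazureRank_cons_of_mem {S : Finset (ℕ × ℕ)} {c : ℕ × ℕ} (hc : c ∈ S) (p : ℕ)
    (L : List (ℕ × ℕ)) :
    demazureRank S p (c :: L) (c.1 + c.2 + 1) =
      max (demazureRank S p L (c.1 + c.2)) (demazureRank S p L (c.1 + c.2 + 2) - 1) :=
  if_pos ⟨rfl, hc⟩

theorem demazureRank_cons_le {S : Finset (ℕ × ℕ)} {c : ℕ × ℕ} (p : ℕ) (L : List (ℕ × ℕ)) (q : ℕ) :
    demazureRank S p (c :: L) q ≤ demazureRank S p L q := by
  by_cases h : q = c.1 + c.2 + 1 ∧ c ∈ S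
  · obtain ⟨rfl, hc⟩ := h
    rw [demazureRank_cons_of_mem hc]
    exact max_le (demazureRank_succ S p L _).1
      (tsub_le_iff_right.2 (demazureRank_succ S p L (c.1 + c.2 + 1)).2)
  · exact (demazureRank_cons_of_ne h p L).le

theorem demazureRank_le_min_of_cons_le {S : Finset (ℕ × ℕ)} {c : ℕ × ℕ} {p : ℕ} {L : List (ℕ × ℕ)}
    {r : ℕ → ℕ} (h : ∀ q, demazureRank S p (c :: L) q ≤ r q) :
    demazureRank S p L (c.1 + c.2 + 1) ≤ min (r (c.1 + c.2) + 1) (r (c.1 + c.2 + 2)) := by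
  have before := h (c.1 + c.2)
  have after := h (c.1 + c.2 + 2)
  rw [demazureRank_cons_of_ne (by omega)] at before after
  exact le_min ((demazureRank_succ S p L _).2.trans (Nat.succ_le_succ before))
    ((demazureRank_succ S p L _).1.trans after)

theorem demazureRank_cons_le_iff {S : Finset (ℕ × ℕ)} {c : ℕ × ℕ} (L : List (ℕ × ℕ)) (w : ℕ → ℕ) :
    (∀ p q, demazureRank S p (c :: L) q ≤ wordRank w p q) ↔
      (∀ p q, demazureRank S p L q ≤ wordRank w p q) ∨ (c ∈ S ∧ w (c.1 + c.2 + 1) < w (c.1 + c.2) ∧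
        ∀ p q, demazureRank S p L q ≤ wordRank (adjSwap (c.1 + c.2) w) p q) := by
  constructor
  · intro h
    by_cases hdesc : c ∈ S ∧ w (c.1 + c.2 + 1) < w (c.1 + c.2)
    · refine Or.inr ⟨hdesc.1, hdesc.2, fun p q => ?_⟩
      by_cases hq : q = c.1 + c.2 + 1
      · rw [hq, wordRank_adjSwap_eq_min hdesc.2]
        exact demazureRank_le_min_of_cons_le (h p)
      · rw [wordRank_adjSwap_of_ne w p hq, ← demazureRank_cons_of_ne (fun h => hq h.1)]
        exact h p q
    · refine Or.inl fun p q => ?_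
      by_cases hq : q = c.1 + c.2 + 1 ∧ c ∈ S
      · rw [hq.1, wordRank_eq_min (not_lt.1 fun hlt => hdesc ⟨hq.2, hlt⟩)]
        exact demazureRank_le_min_of_cons_le (h p)
      · rw [← demazureRank_cons_of_ne hq]
        exact h p q
  · rintro (h | ⟨hc, hdesc, h⟩) p q
    · exact (demazureRank_cons_le p L q).trans (h p q)
    · by_cases hq : q = c.1 + c.2 + 1
      · have before := h p (c.1 + c.2)
        have after := h p (c.1 + c.2 + 2)
        rw [wordRank_adjSwap_of_ne w p (by omega)] at before after
        rw [hq, demazureRank_cons_of_mem hc, wordRank_eq_max hdesc]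
        exact max_le_max before (Nat.sub_le_sub_right after 1)
      · rw [demazureRank_cons_of_ne (fun h => hq h.1), ← wordRank_adjSwap_of_ne w p hq]
        exact h p q

theorem exists_isReducedSubword_iff {S : Finset (ℕ × ℕ)} :
    ∀ {L : List (ℕ × ℕ)}, L.Nodup → ∀ {w : ℕ → ℕ}, Function.Injective w →
      ((∃ S' ⊆ S, IsReducedSubword S' L w) ↔ ∀ p q, demazureRank S p L q ≤ wordRank w p q)
  | [], _, w, hw => by
    constructor
    · rintro ⟨_, -, rfl⟩ p q
      exact (wordRank_id p q).ge
    · exact fun h => ⟨∅, Finset.empty_subset S, eq_id_of_min_le_wordRank hw h⟩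
  | c :: L, hL, w, hw => by
    obtain ⟨hc, hL⟩ := List.nodup_cons.1 hL
    rw [exists_isReducedSubword_cons hc, demazureRank_cons_le_iff,
      exists_isReducedSubword_iff hL hw, exists_isReducedSubword_iff hL (adjSwap_injective hw)]

theorem IsReducedSubword.wordRank_le {S : Finset (ℕ × ℕ)} (p : ℕ) :
    ∀ {L : List (ℕ × ℕ)} {w : ℕ → ℕ}, IsReducedSubword S L w →
      ∀ q, wordRank w p q ≤ demazureRank S p L q
  | [], _, rfl, q => (wordRank_id p q).le
  | c :: L, w, Or.inl ⟨hc, hdesc, h⟩, q => by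
    have ih := IsReducedSubword.wordRank_le p h
    rw [demazureRank]
    split_ifs with hq
    · rw [hq.1, wordRank_eq_max hdesc]
      have before := ih (c.1 + c.2)
      have after := ih (c.1 + c.2 + 2)
      rw [wordRank_adjSwap_of_ne w p (by omega)] at before after
      omega
    · rw [← wordRank_adjSwap_of_ne w p fun hne => hq ⟨hne, hc⟩]
      exact ih q
  | c :: L, w, Or.inr ⟨hc, h⟩, q => by
    rw [demazureRank, if_neg fun hq => hc hq.2]
    exact IsReducedSubword.wordRank_le p h q

theorem IsReducedSubword.mem_of_subset {S S' : Finset (ℕ × ℕ)} (hS : S' ⊆ S) :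
    ∀ {L : List (ℕ × ℕ)}, L.Nodup → ∀ {w : ℕ → ℕ}, Function.Injective w →
      IsReducedSubword S L w → IsReducedSubword S' L w → ∀ d ∈ L, d ∈ S → d ∈ S'
  | [], _, _, _, _, _ => List.forall_mem_nil _
  | c :: L, hL, w, hw, Or.inl ⟨_, hdesc, h⟩, Or.inr ⟨_, h'⟩ => by
    have le_rank := (exists_isReducedSubword_iff (List.nodup_cons.1 hL).2 hw).1 ⟨S', hS, h'⟩
      (w (c.1 + c.2)) (c.1 + c.2 + 1)
    have rank_le := h.wordRank_le (w (c.1 + c.2)) (c.1 + c.2 + 1)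
    rw [wordRank_succ, adjSwap_left, if_pos hdesc, wordRank_adjSwap_of_ne w _ (by omega)] at rank_le
    rw [wordRank_succ, if_neg (lt_irrefl _)] at le_rank
    omega
  | c :: L, hL, w, hw, Or.inl ⟨_, _, h⟩, Or.inl ⟨hc', _, h'⟩ => List.forall_mem_cons.2
      ⟨fun _ => hc', mem_of_subset hS (List.nodup_cons.1 hL).2 (adjSwap_injective hw) h h'⟩
  | c :: L, hL, w, hw, Or.inr ⟨hc, h⟩, Or.inr ⟨_, h'⟩ => List.forall_mem_cons.2
      ⟨fun hcS => absurd hcS hc, mem_of_subset hS (List.nodup_cons.1 hL).2 hw h h'⟩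
  | c :: L, _, _, _, Or.inr ⟨hc, _⟩, Or.inl ⟨hc', _⟩ => absurd (hS hc') hc

theorem IsReducedSubword.le_of_mem {S : Finset (ℕ × ℕ)} {k : ℕ} :
    ∀ {L : List (ℕ × ℕ)} {w : ℕ → ℕ}, Function.Injective w → (∀ b < k, w b = b) →
      IsReducedSubword S L w → ∀ d ∈ L, d ∈ S → k ≤ d.1 + d.2
  | [], _, _, _, _ => List.forall_mem_nil _
  | c :: L, w, hw, hfix, Or.inl ⟨_, hdesc, h⟩ => by
    have hk : k ≤ c.1 + c.2 := by
      by_contra hlt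
      have fixed := hfix (c.1 + c.2) (by omega)
      have := hw (hfix (w (c.1 + c.2 + 1)) (by omega))
      omega
    exact List.forall_mem_cons.2 ⟨fun _ => hk, le_of_mem (adjSwap_injective hw) (fun b hb => by
      rw [adjSwap_of_ne w (by omega) (by omega), hfix b hb]) h⟩
  | c :: L, w, hw, hfix, Or.inr ⟨hc, h⟩ =>
    List.forall_mem_cons.2 ⟨fun hcS => absurd hcS hc, le_of_mem hw hfix h⟩

end Subwords

/-! ### Chains of cells avoiding a set -/

section Chains

/-- The cell `c'` lies strictly below and strictly to the left of `c`. -/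
def Southwest (c c' : ℕ × ℕ) : Prop := c.1 < c'.1 ∧ c'.2 < c.2

/-- A southwest chain of cells outside `S` in the rectangle `[0, i) × [p - d, p)`. -/
structure IsAvoidingChain (S : Finset (ℕ × ℕ)) (p i d : ℕ) (C : Finset (ℕ × ℕ)) : Prop where
  isChain : IsChain Southwest (C : Set (ℕ × ℕ))
  notMem {c : ℕ × ℕ} (hc : c ∈ C) : c ∉ S
  row_lt {c : ℕ × ℕ} (hc : c ∈ C) : c.1 < i
  le_col_add {c : ℕ × ℕ} (hc : c ∈ C) : p ≤ c.2 + d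
  col_lt {c : ℕ × ℕ} (hc : c ∈ C) : c.2 < p

open Classical in
/-- The greatest size of an `IsAvoidingChain S p i d`, computed from the corner `(i - 1, p - d)`. -/
noncomputable def longestChain (S : Finset (ℕ × ℕ)) (p : ℕ) : ℕ → ℕ → ℕ
  | 0, _ => 0
  | _ + 1, 0 => 0
  | i + 1, d + 1 =>
    if (i, p - (d + 1)) ∈ S then max (longestChain S p i (d + 1)) (longestChain S p (i + 1) d)
    else longestChain S p i d + 1

variable {S : Finset (ℕ × ℕ)} {p : ℕ}

theorem longestChain_zero_left (d : ℕ) : longestChain S p 0 d = 0 := by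
  rw [longestChain]

theorem longestChain_zero_right (i : ℕ) : longestChain S p i 0 = 0 := by
  cases i <;> rw [longestChain]

namespace IsAvoidingChain

variable {i d i' d' : ℕ} {C : Finset (ℕ × ℕ)}

theorem mono (h : IsAvoidingChain S p i d C) (hi : i ≤ i') (hd : d ≤ d') :
    IsAvoidingChain S p i' d' C where
  isChain := h.isChain
  notMem := h.notMem
  row_lt hc := (h.row_lt hc).trans_le hi
  le_col_add hc := (h.le_col_add hc).trans (by omega)
  col_lt := h.col_lt

theorem insert_corner (h : IsAvoidingChain S p i d C) (hd : d < p) (hS : (i, p - (d + 1)) ∉ S) :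
    IsAvoidingChain S p (i + 1) (d + 1) (insert (i, p - (d + 1)) C) where
  isChain := by
    rw [Finset.coe_insert]
    refine h.isChain.insert fun c hc _ => Or.inr ⟨h.row_lt hc, ?_⟩
    have := h.le_col_add hc
    change p - (d + 1) < c.2
    omega
  notMem hc := by
    rcases Finset.mem_insert.1 hc with rfl | hc
    exacts [hS, h.notMem hc]
  row_lt hc := by
    rcases Finset.mem_insert.1 hc with rfl | hc
    exacts [i.lt_succ_self, (h.row_lt hc).trans i.lt_succ_self]
  le_col_add hc := by
    rcases Finset.mem_insert.1 hc with rfl | hc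
    exacts [by omega, (h.le_col_add hc).trans (by omega)]
  col_lt hc := by
    rcases Finset.mem_insert.1 hc with rfl | hc
    exacts [by omega, h.col_lt hc]

theorem corner_notMem (h : IsAvoidingChain S p i d C) : (i, p - (d + 1)) ∉ C := fun hc =>
  lt_irrefl i (h.row_lt hc)

theorem eq_of_boundary (h : IsAvoidingChain S p (i + 1) (d + 1) C) {c c' : ℕ × ℕ} (hc : c ∈ C)
    (hc' : c' ∈ C) (hb : c.1 = i ∨ c.2 + (d + 1) = p) (hb' : c'.1 = i ∨ c'.2 + (d + 1) = p) :
    c = c' := by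
  by_contra hne
  have := h.row_lt hc
  have := h.row_lt hc'
  have := h.le_col_add hc
  have := h.le_col_add hc'
  rcases h.isChain hc hc' hne with ⟨h₁, h₂⟩ | ⟨h₁, h₂⟩ <;> omega

theorem filter_interior (h : IsAvoidingChain S p (i + 1) (d + 1) C) :
    IsAvoidingChain S p i d {c ∈ C | ¬(c.1 = i ∨ c.2 + (d + 1) = p)} where
  isChain := h.isChain.mono (Finset.filter_subset _ _)
  notMem hc := h.notMem (Finset.mem_of_mem_filter _ hc)
  row_lt {c} hc := by
    obtain ⟨hc, hb⟩ := Finset.mem_filter.1 hc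
    have := h.row_lt hc
    omega
  le_col_add {c} hc := by
    obtain ⟨hc, hb⟩ := Finset.mem_filter.1 hc
    have := h.le_col_add hc
    omega
  col_lt hc := h.col_lt (Finset.mem_of_mem_filter _ hc)

theorem card_le_filter_interior (h : IsAvoidingChain S p (i + 1) (d + 1) C) :
    C.card ≤ ({c ∈ C | ¬(c.1 = i ∨ c.2 + (d + 1) = p)} : Finset (ℕ × ℕ)).card + 1 := by
  rw [← Finset.card_filter_add_card_filter_not (s := C) fun c => c.1 = i ∨ c.2 + (d + 1) = p,
    add_comm]
  refine Nat.add_le_add_left (Finset.card_le_one.2 fun c hc c' hc' => ?_) _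
  obtain ⟨hc, hb⟩ := Finset.mem_filter.1 hc
  obtain ⟨hc', hb'⟩ := Finset.mem_filter.1 hc'
  exact h.eq_of_boundary hc hc' hb hb'

theorem shrink_of_corner_mem (h : IsAvoidingChain S p (i + 1) (d + 1) C)
    (hS : (i, p - (d + 1)) ∈ S) :
    IsAvoidingChain S p i (d + 1) C ∨ IsAvoidingChain S p (i + 1) d C := by
  by_cases hrow : ∀ c ∈ C, c.1 ≠ i
  · refine Or.inl { h with row_lt := fun {c} hc => ?_ }
    have := h.row_lt hc
    have := hrow c hc
    omega
  · push Not at hrow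
    obtain ⟨e, he, hei⟩ := hrow
    refine Or.inr { h with le_col_add := fun {c} hc => ?_ }
    have hcol := h.le_col_add hc
    by_contra hlt
    obtain rfl := h.eq_of_boundary he hc (Or.inl hei) (Or.inr (by omega))
    exact h.notMem he (by rwa [show e = (i, p - (d + 1)) from Prod.ext hei (by simp; omega)])

theorem card_le_longestChain :
    ∀ {i d} {C : Finset (ℕ × ℕ)}, IsAvoidingChain S p i d C → C.card ≤ longestChain S p i d
  | 0, d, C, h => by
    rw [Finset.eq_empty_of_forall_notMem fun c hc => absurd (h.row_lt hc) (Nat.not_lt_zero _)]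
    exact Nat.zero_le _
  | i + 1, 0, C, h => by
    rw [Finset.eq_empty_of_forall_notMem fun c hc =>
      absurd (h.col_lt hc) (not_lt.2 (h.le_col_add hc))]
    exact Nat.zero_le _
  | i + 1, d + 1, C, h => by
    rw [longestChain]
    split_ifs with hS
    · rcases h.shrink_of_corner_mem hS with h | h
      · exact le_max_of_le_left h.card_le_longestChain
      · exact le_max_of_le_right h.card_le_longestChain
    · exact h.card_le_filter_interior.trans
        (Nat.succ_le_succ h.filter_interior.card_le_longestChain)

end IsAvoidingChain

theorem exists_isAvoidingChain_card_eq (S : Finset (ℕ × ℕ)) (p : ℕ) :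
    ∀ i d, d ≤ p → ∃ C, IsAvoidingChain S p i d C ∧ C.card = longestChain S p i d
  | 0, d, _ => ⟨∅, by constructor <;> simp, by rw [longestChain_zero_left, Finset.card_empty]⟩
  | i + 1, 0, _ => ⟨∅, by constructor <;> simp, by rw [longestChain_zero_right, Finset.card_empty]⟩
  | i + 1, d + 1, hd => by
    rw [longestChain]
    split_ifs with hS
    · rcases max_choice (longestChain S p i (d + 1)) (longestChain S p (i + 1) d) with h | h
      · obtain ⟨C, hC, hcard⟩ := exists_isAvoidingChain_card_eq S p i (d + 1) hd
        exact ⟨C, hC.mono i.le_succ le_rfl, by rw [h, hcard]⟩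
      · obtain ⟨C, hC, hcard⟩ := exists_isAvoidingChain_card_eq S p (i + 1) d (by omega)
        exact ⟨C, hC.mono le_rfl d.le_succ, by rw [h, hcard]⟩
    · obtain ⟨C, hC, hcard⟩ := exists_isAvoidingChain_card_eq S p i d (by omega)
      exact ⟨_, hC.insert_corner hd hS, by
        rw [Finset.card_insert_of_notMem hC.corner_notMem, hcard]⟩

theorem longestChain_antidiagonal {N : ℕ} (hS : ∀ c ∈ S, c.1 + c.2 + 2 ≤ N) :
    ∀ d i, d ≤ i → d ≤ p → i + p = N + d → longestChain S p i d = d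
  | 0, i, _, _, _ => longestChain_zero_right i
  | d + 1, i + 1, hi, hd, h => by
    have corner_notMem : (i, p - (d + 1)) ∉ S := fun hc => by
      have := hS _ hc
      simp only at this
      omega
    rw [longestChain, if_neg corner_notMem,
      longestChain_antidiagonal hS d i (by omega) (by omega) (by omega)]

/-- The value at `q` of the Demazure rank function of the first `i` rows of the staircase word. -/
noncomputable def rowsRank (S : Finset (ℕ × ℕ)) (p i q : ℕ) : ℕ :=
  min (q - i) p + longestChain S p (min i q) (p - (q - i))

theorem rowsRank_add (S : Finset (ℕ × ℕ)) (p i j : ℕ) :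
    rowsRank S p i (i + j) = min j p + longestChain S p i (p - j) := by
  rw [rowsRank, Nat.add_sub_cancel_left, min_eq_left (Nat.le_add_right i j)]

theorem rowsRank_top {N i : ℕ} (hS : ∀ c ∈ S, c.1 + c.2 + 2 ≤ N) (hp : p ≤ N) (hi : i ≤ N) :
    rowsRank S p i N = p := by
  rw [rowsRank, min_eq_left hi]
  rcases Nat.lt_or_ge p (N - i) with h | h
  · rw [show p - (N - i) = 0 by omega, longestChain_zero_right]
    omega
  · rw [longestChain_antidiagonal hS (p - (N - i)) i (by omega) (by omega) (by omega)]
    omega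

theorem rowsRank_succ (S : Finset (ℕ × ℕ)) (p i j : ℕ) [Decidable ((i, j) ∈ S)] :
    rowsRank S p (i + 1) (i + j + 1) =
      if (i, j) ∈ S then max (rowsRank S p i (i + j)) (rowsRank S p (i + 1) (i + j + 2) - 1)
      else rowsRank S p i (i + j + 1) := by
  have here : rowsRank S p (i + 1) (i + j + 1) = _ :=
    add_right_comm i j 1 ▸ rowsRank_add S p (i + 1) j
  have after : rowsRank S p (i + 1) (i + j + 2) = _ :=
    (by omega : i + 1 + (j + 1) = i + j + 2) ▸ rowsRank_add S p (i + 1) (j + 1)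
  rw [here, after, rowsRank_add S p i j, add_assoc i j 1, rowsRank_add]
  rcases Nat.lt_or_ge j p with hj | hj
  · obtain ⟨d, rfl⟩ : ∃ d, p = j + d + 1 := ⟨p - j - 1, by omega⟩
    rw [show j + d + 1 - j = d + 1 by omega, show j + d + 1 - (j + 1) = d by omega, longestChain,
      show j + d + 1 - (d + 1) = j by omega]
    split_ifs <;> omega
  · rw [show p - (j + 1) = 0 by omega, show p - j = 0 by omega]
    simp only [longestChain_zero_right]
    split_ifs <;> omega

open Classical in
theorem demazureRank_row_append {N i : ℕ} (L : List (ℕ × ℕ))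
    (hL : ∀ q ≤ N, demazureRank S p L q = rowsRank S p i q)
    (htop : rowsRank S p (i + 1) N = rowsRank S p i N) :
    ∀ l j, i + j + l + 1 = N → ∀ q ≤ N,
      demazureRank S p ((List.range' j l).map (Prod.mk i) ++ L) q =
        if i + j + 1 ≤ q then rowsRank S p (i + 1) q else rowsRank S p i q
  | 0, j, h, q, hq => by
    rw [List.range'_zero, List.map_nil, List.nil_append, hL q hq]
    split_ifs with hle
    · rw [show q = N by omega, htop]
    · rfl
  | l + 1, j, h, q, hq => by
    have ih := demazureRank_row_append L hL htop l (j + 1) (by omega)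
    rw [List.range'_succ, List.map_cons, List.cons_append]
    rcases eq_or_ne q (i + j + 1) with rfl | hne
    · have before := ih (i + j) (by omega)
      have middle := ih (i + j + 1) hq
      have after := ih (i + j + 2) (by omega)
      rw [if_neg (by omega)] at before middle
      rw [if_pos (by omega)] at after
      rw [if_pos le_rfl, rowsRank_succ, ← before, ← middle, ← after]
      split_ifs with hS
      · exact demazureRank_cons_of_mem hS _ _
      · exact demazureRank_cons_of_ne (fun hq => hS hq.2) _ _
    · rw [demazureRank_cons_of_ne fun hq => hne hq.1, ih q hq]
      exact if_congr (by omega) rfl rfl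

theorem demazureRank_staircaseWord {N : ℕ} (hS : ∀ c ∈ S, c.1 + c.2 + 2 ≤ N) (hp : p ≤ N) :
    ∀ i, i + 1 ≤ N → ∀ q ≤ N, demazureRank S p (staircaseWord N i) q = rowsRank S p i q
  | 0, _, q, _ => by
    rw [staircaseWord, demazureRank, rowsRank, Nat.zero_min, longestChain_zero_left, Nat.sub_zero,
      min_comm, add_zero]
  | i + 1, hi, q, hq => by
    have top : rowsRank S p (i + 1) N = rowsRank S p i N := by
      rw [rowsRank_top hS hp (by omega), rowsRank_top hS hp (by omega)]
    rw [staircaseWord, demazureRank_row_append _ (demazureRank_staircaseWord hS hp i (by omega)) top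
      (N - 1 - i) 0 (by omega) q hq]
    split_ifs with h
    · rfl
    · rw [rowsRank, rowsRank, show q - i = 0 by omega, show q - (i + 1) = 0 by omega,
        min_eq_right (by omega : q ≤ i), min_eq_right (by omega : q ≤ i + 1)]

theorem demazureRank_staircaseWord_eq_longestChain {N q : ℕ} (hS : ∀ c ∈ S, c.1 + c.2 + 2 ≤ N)
    (hp : p ≤ N) (hq : q + 1 ≤ N) :
    demazureRank S p (staircaseWord N (N - 1)) q = longestChain S p q p := by
  rw [demazureRank_staircaseWord hS hp (N - 1) (by omega) q (by omega), rowsRank,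
    show q - (N - 1) = 0 by omega, min_eq_right (by omega : q ≤ N - 1), Nat.zero_min, zero_add,
    Nat.sub_zero]

theorem reverseAbove_injective {N k : ℕ} (hN : k + 1 ≤ N) :
    Function.Injective (reverseAbove N k k) := by
  intro a b h
  unfold reverseAbove at h
  split_ifs at h <;> omega

theorem wordRank_reverseAbove {N k p : ℕ} (hN : k + 1 ≤ N) :
    ∀ q, wordRank (reverseAbove N k k) p q =
      if p ≤ k ∨ N ≤ p then min p q else min q (max k (min q N + p - N))
  | 0 => by rw [wordRank, Nat.count_zero]; split_ifs <;> omega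
  | q + 1 => by
    rw [wordRank_succ, wordRank_reverseAbove hN q]
    unfold reverseAbove
    split_ifs <;> omega

theorem demazureRank_le_wordRank_reverseAbove_iff {N k : ℕ} (hN : k + 1 ≤ N)
    (L : List (ℕ × ℕ)) :
    (∀ p q, demazureRank S p L q ≤ wordRank (reverseAbove N k k) p q) ↔
      ∀ p, k < p → p < N → demazureRank S p L (N + k - p) ≤ k := by
  constructor
  · intro h p hkp hpN
    have := h p (N + k - p)
    rw [wordRank_reverseAbove hN, if_neg (by omega)] at this
    omega
  · intro h p q
    have le_min := demazureRank_le S p L q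
    rw [wordRank_reverseAbove hN]
    split_ifs with hp
    · exact le_min
    · have at_corner := h p (by omega) (by omega)
      rcases Nat.lt_or_ge q (N + k - p) with hq | hq
      · have := demazureRank_mono S p L hq.le
        omega
      · have := demazureRank_add_le S p L (N + k - p) (q - (N + k - p))
        rw [Nat.add_sub_cancel' hq] at this
        omega

theorem exists_isReducedSubword_reverseAbove_iff {N k : ℕ} (hN : k + 1 ≤ N)
    (hS : ∀ c ∈ S, c.1 + c.2 + 2 ≤ N) :
    (∃ S' ⊆ S, IsReducedSubword S' (staircaseWord N (N - 1)) (reverseAbove N k k)) ↔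
      ∀ p, k < p → p < N → ∀ C, IsAvoidingChain S p (N + k - p) p C → C.card ≤ k := by
  rw [exists_isReducedSubword_iff (nodup_staircaseWord N _) (reverseAbove_injective hN),
    demazureRank_le_wordRank_reverseAbove_iff hN]
  refine forall₃_congr fun p hkp hpN => ?_
  rw [demazureRank_staircaseWord_eq_longestChain hS hpN.le (by omega)]
  constructor
  · exact fun h C hC => hC.card_le_longestChain.trans h
  · intro h
    obtain ⟨C, hC, hcard⟩ := exists_isAvoidingChain_card_eq S p (N + k - p) p le_rfl
    exact hcard ▸ h C hC

end Chains

/-! ### Complements of families of diagonals -/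

section Complements

namespace IsAvoidingChain

variable {S C C' : Finset (ℕ × ℕ)} {p i d : ℕ} {c c' : ℕ × ℕ} {t : Finset ℕ}

theorem injOn_fst (h : IsAvoidingChain S p i d C) :
    Set.InjOn Prod.fst (C : Set (ℕ × ℕ)) := fun c hc c' hc' heq => by
  by_contra hne
  rcases h.isChain hc hc' hne with hlt | hlt
  exacts [hlt.1.ne heq, hlt.1.ne' heq]

theorem injOn_snd (h : IsAvoidingChain S p i d C) :
    Set.InjOn Prod.snd (C : Set (ℕ × ℕ)) := fun c hc c' hc' heq => by
  by_contra hne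
  rcases h.isChain hc hc' hne with hlt | hlt
  exacts [hlt.2.ne' heq, hlt.2.ne heq]

theorem card_le_of_fst_mem (h : IsAvoidingChain S p i d C) (hC' : C' ⊆ C)
    (ht : ∀ c ∈ C', c.1 ∈ t) : C'.card ≤ t.card :=
  Finset.card_le_card_of_injOn Prod.fst ht (h.injOn_fst.mono (Finset.coe_subset.2 hC'))

theorem card_le_of_snd_mem (h : IsAvoidingChain S p i d C) (hC' : C' ⊆ C)
    (ht : ∀ c ∈ C', c.2 ∈ t) : C'.card ≤ t.card :=
  Finset.card_le_card_of_injOn Prod.snd ht (h.injOn_snd.mono (Finset.coe_subset.2 hC'))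

theorem card_le_row (h : IsAvoidingChain S p i d C) : C.card ≤ i := by
  simpa only [Finset.card_range] using
    h.card_le_of_fst_mem subset_rfl fun c hc => Finset.mem_range.2 (h.row_lt hc)

theorem card_le_col (h : IsAvoidingChain S p i d C) : C.card ≤ p := by
  simpa only [Finset.card_range] using
    h.card_le_of_snd_mem subset_rfl fun c hc => Finset.mem_range.2 (h.col_lt hc)

theorem snd_lt_of_fst_lt (h : IsAvoidingChain S p i d C) (hc : c ∈ C) (hc' : c' ∈ C)
    (hlt : c.1 < c'.1) : c'.2 < c.2 := by
  rcases h.isChain hc hc' (ne_of_apply_ne Prod.fst hlt.ne) with hsw | hsw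
  exacts [hsw.2, absurd hsw.1 hlt.not_gt]

theorem snd_le_of_fst_le (h : IsAvoidingChain S p i d C) (hc : c ∈ C) (hc' : c' ∈ C)
    (hle : c.1 ≤ c'.1) : c'.2 ≤ c.2 := by
  rcases hle.eq_or_lt with heq | hlt
  exacts [(congrArg Prod.snd (h.injOn_fst hc hc' heq)).ge, (h.snd_lt_of_fst_lt hc hc' hlt).le]

theorem card_le_fst_add_snd (h : IsAvoidingChain S p i d C) (hc : c ∈ C) :
    C.card ≤ c.1 + c.2 + 1 := by
  have above := h.card_le_of_fst_mem (t := Finset.range c.1)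
    (Finset.filter_subset (fun c' => c'.1 < c.1) C)
    fun c' hc' => Finset.mem_range.2 (Finset.mem_filter.1 hc').2
  have below := h.card_le_of_snd_mem (t := Finset.range (c.2 + 1))
    (Finset.filter_subset (fun c' => ¬c'.1 < c.1) C) fun c' hc' =>
      have hc' := Finset.mem_filter.1 hc'
      Finset.mem_range_succ_iff.2 (h.snd_le_of_fst_le hc hc'.1 (not_lt.1 hc'.2))
  rw [← Finset.card_filter_add_card_filter_not (fun c' => c'.1 < c.1)]
  rw [Finset.card_range] at above below
  omega

theorem card_add_fst_add_snd_le (h : IsAvoidingChain S p i d C) (hc : c ∈ C) :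
    C.card + (c.1 + c.2 + 1) ≤ i + p := by
  have above := h.card_le_of_snd_mem (t := Finset.Ioo c.2 p)
    (Finset.filter_subset (fun c' => c'.1 < c.1) C) fun c' hc' =>
      have hc' := Finset.mem_filter.1 hc'
      Finset.mem_Ioo.2 ⟨h.snd_lt_of_fst_lt hc'.1 hc hc'.2, h.col_lt hc'.1⟩
  have below := h.card_le_of_fst_mem (t := Finset.Ico c.1 i)
    (Finset.filter_subset (fun c' => ¬c'.1 < c.1) C) fun c' hc' =>
      have hc' := Finset.mem_filter.1 hc'
      Finset.mem_Ico.2 ⟨not_lt.1 hc'.2, h.row_lt hc'.1⟩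
  rw [← Finset.card_filter_add_card_filter_not (fun c' => c'.1 < c.1)]
  rw [Nat.card_Ioo] at above
  rw [Nat.card_Ico] at below
  have := h.row_lt hc
  have := h.col_lt hc
  omega

end IsAvoidingChain

variable {n k N v : ℕ} {D D' : Set (Fin n × Fin n)} {S S' : Finset (ℕ × ℕ)}
  {p q : Fin n × Fin n}

theorem validFam_iff : ValidFam n k D ↔ (∀ p ∈ D, p.1 < p.2 ∧ 2 ≤ cdist n p.1 p.2) ∧
    ∀ F : Finset (Fin n × Fin n), (F : Set (Fin n × Fin n)) ⊆ D →
      (F : Set (Fin n × Fin n)).Pairwise Crosses → F.card ≤ k := by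
  refine and_congr_right fun _ => ⟨fun h F hF hcross => ?_, fun h ⟨f, hf, hD, hcross⟩ => ?_⟩
  · by_contra! hlt
    obtain ⟨F', hF', hcard⟩ := Finset.exists_subset_card_eq hlt
    let e := F'.equivFinOfCardEq hcard
    exact h ⟨fun i => (e.symm i : Fin n × Fin n),
      Subtype.val_injective.comp e.symm.injective, fun i => hF (hF' (e.symm i).2), fun i j hij =>
        hcross (hF' (e.symm i).2) (hF' (e.symm j).2)
          ((Subtype.val_injective.comp e.symm.injective).ne hij)⟩
  · have := h (Finset.univ.map ⟨f, hf⟩) (by simpa [Set.range_subset_iff] using hD) (by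
      rw [Finset.coe_map, Finset.coe_univ, Set.image_univ]
      rintro _ ⟨i, rfl⟩ _ ⟨j, rfl⟩ hne
      exact hcross i j (ne_of_apply_ne f hne))
    simp at this

/-- The cell of the staircase encoding the diagonal joining the first to the second vertex. -/
def diagonalCell (p : Fin n × Fin n) : ℕ × ℕ := (p.1, n - 1 - p.2)

theorem diagonalCell_injective : Function.Injective (diagonalCell (n := n)) := fun p q h => by
  obtain ⟨h₁, h₂⟩ := Prod.ext_iff.1 h
  simp only [diagonalCell] at h₁ h₂
  ext <;> omega

theorem southwest_diagonalCell_iff :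
    Southwest (diagonalCell p) (diagonalCell q) ↔ p.1 < q.1 ∧ p.2 < q.2 := by
  simp only [Southwest, diagonalCell, Fin.lt_def]
  omega

theorem exists_diagonalCell_eq {c : ℕ × ℕ} (hc : c.1 + c.2 + 2 ≤ n) :
    ∃ p : Fin n × Fin n, p.1 < p.2 ∧ diagonalCell p = c :=
  ⟨(⟨c.1, by omega⟩, ⟨n - 1 - c.2, by omega⟩), Fin.mk_lt_mk.2 (by omega),
    Prod.ext rfl (by simp only [diagonalCell]; omega)⟩

theorem lt_cdist_iff_diagonalCell (hn : N + k = n) (hp : p.1 < p.2) : k < cdist n p.1 p.2 ↔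
    k ≤ (diagonalCell p).1 + (diagonalCell p).2 ∧
      (diagonalCell p).1 + (diagonalCell p).2 + 2 ≤ N := by
  rw [cdist, max_eq_right (Fin.le_def.1 hp.le), min_eq_left (Fin.le_def.1 hp.le), lt_min_iff]
  simp only [diagonalCell]
  omega

/-- The diagonals whose cells avoid `S`. -/
def complementDiagonals (n : ℕ) (S : Finset (ℕ × ℕ)) : Set (Fin n × Fin n) :=
  {p | p.1 < p.2 ∧ 2 ≤ cdist n p.1 p.2 ∧ diagonalCell p ∉ S}

open Classical in
/-- The cells of the nontrivial diagonals of the `(N + k)`-gon that do not belong to `D`. -/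
noncomputable def complementCells (N k : ℕ) (D : Set (Fin n × Fin n)) : Finset (ℕ × ℕ) :=
  {c ∈ (staircaseWord N (N - 1)).toFinset | k ≤ c.1 + c.2 ∧ c ∉ diagonalCell '' D}

open Classical in
theorem mem_complementCells {c : ℕ × ℕ} : c ∈ complementCells N k D ↔
    c.1 + c.2 + 2 ≤ N ∧ k ≤ c.1 + c.2 ∧ c ∉ diagonalCell '' D := by
  rw [complementCells, Finset.mem_filter, List.mem_toFinset, mem_staircaseWord]
  exact and_congr_left fun _ => ⟨And.right, fun h => ⟨by omega, h⟩⟩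

theorem complementDiagonals_anti (h : S ⊆ S') :
    complementDiagonals n S' ⊆ complementDiagonals n S :=
  fun _ hp => ⟨hp.1, hp.2.1, fun hS => hp.2.2 (h hS)⟩

theorem complementCells_anti (h : D ⊆ D') : complementCells N k D' ⊆ complementCells N k D :=
  fun c hc => by
    rw [mem_complementCells] at hc ⊢
    exact ⟨hc.1, hc.2.1, fun hD => hc.2.2 (Set.image_mono h hD)⟩

theorem ValidFam.subset_complementDiagonals_complementCells (h : ValidFam n k D) :
    D ⊆ complementDiagonals n (complementCells N k D) := fun p hp =>
  ⟨(h.1 p hp).1, (h.1 p hp).2, fun hc =>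
    (mem_complementCells.1 hc).2.2 (Set.mem_image_of_mem _ hp)⟩

theorem complementCells_complementDiagonals (hn : N + k = n) (hk : 1 ≤ k)
    (hle : ∀ c ∈ S, c.1 + c.2 + 2 ≤ N) (hge : ∀ c ∈ S, k ≤ c.1 + c.2) :
    complementCells N k (complementDiagonals n S) = S := by
  ext c
  rw [mem_complementCells]
  constructor
  · rintro ⟨hcN, hkc, hc⟩
    obtain ⟨p, hp, rfl⟩ := exists_diagonalCell_eq (n := n) (c := c) (by omega)
    by_contra hS
    exact hc ⟨p, ⟨hp, hk.trans_lt ((lt_cdist_iff_diagonalCell hn hp).2 ⟨hkc, hcN⟩), hS⟩, rfl⟩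
  · rintro hc
    refine ⟨hle c hc, hge c hc, ?_⟩
    rintro ⟨p, hp, rfl⟩
    exact hp.2.2 hc

theorem ValidFam.card_le_of_isAvoidingChain (h : ValidFam n k D) (hn : N + k = n) {r : ℕ}
    (hr : r < N) {C : Finset (ℕ × ℕ)}
    (hC : IsAvoidingChain (complementCells N k D) r (N + k - r) r C) : C.card ≤ k := by
  by_contra! hlt
  have cells_subset : (C : Set (ℕ × ℕ)) ⊆ diagonalCell '' D := fun c hc => by
    by_contra hD
    have := hC.card_le_fst_add_snd hc
    have := hC.card_add_fst_add_snd_le hc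
    exact hC.notMem hc (mem_complementCells.2 ⟨by omega, by omega, hD⟩)
  obtain ⟨F, hF, rfl⟩ := Finset.subset_set_image_iff.1 cells_subset
  have crosses_of_southwest {p q : Fin n × Fin n} (hp : p ∈ F) (hq : q ∈ F)
      (hpq : Southwest (diagonalCell p) (diagonalCell q)) :
      p.1 < q.1 ∧ q.1 < p.2 ∧ p.2 < q.2 := by
    have row := hC.row_lt (Finset.mem_image_of_mem _ hq)
    have col := hC.col_lt (Finset.mem_image_of_mem _ hp)
    simp only [diagonalCell] at row col
    rw [southwest_diagonalCell_iff] at hpq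
    exact ⟨hpq.1, Fin.lt_def.2 (by omega), hpq.2⟩
  refine hlt.not_ge (Finset.card_image_le.trans ((validFam_iff.1 h).2 F hF fun p hp q hq hpq => ?_))
  exact (hC.isChain (Finset.mem_image_of_mem _ hp) (Finset.mem_image_of_mem _ hq)
    (diagonalCell_injective.ne hpq)).imp (crosses_of_southwest hp hq) (crosses_of_southwest hq hp)

theorem isAvoidingChain_of_pairwise_crosses {F : Finset (Fin n × Fin n)}
    (hF : (F : Set (Fin n × Fin n)) ⊆ complementDiagonals n S)
    (hcross : (F : Set (Fin n × Fin n)).Pairwise Crosses) (hp : p ∈ F)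
    (hmin : ∀ q ∈ F, p.2 ≤ q.2) :
    IsAvoidingChain S (n - p.2) p.2 (n - p.2) (F.image diagonalCell) where
  isChain := by
    rw [Finset.coe_image]
    rintro _ ⟨q, hq, rfl⟩ _ ⟨q', hq', rfl⟩ hne
    rw [southwest_diagonalCell_iff, southwest_diagonalCell_iff]
    exact (hcross hq hq' (ne_of_apply_ne _ hne)).imp (fun h => ⟨h.1, h.2.2⟩) fun h => ⟨h.1, h.2.2⟩
  notMem hc := by
    obtain ⟨q, hq, rfl⟩ := Finset.mem_image.1 hc
    exact (hF hq).2.2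
  row_lt hc := by
    obtain ⟨q, hq, rfl⟩ := Finset.mem_image.1 hc
    change q.1 < p.2
    rcases eq_or_ne p q with rfl | hne
    · exact (hF hp).1
    · rcases hcross hp hq hne with h | h
      exacts [h.2.1, h.1.trans (hF hp).1]
  le_col_add _ := Nat.le_add_left _ _
  col_lt hc := by
    obtain ⟨q, hq, rfl⟩ := Finset.mem_image.1 hc
    have := hmin q hq
    simp only [diagonalCell]
    omega

theorem validFam_complementDiagonals (hn : N + k = n)
    (h : ∀ r, k < r → r < N → ∀ C, IsAvoidingChain S r (N + k - r) r C → C.card ≤ k) :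
    ValidFam n k (complementDiagonals n S) := by
  refine validFam_iff.2 ⟨fun p hp => ⟨hp.1, hp.2.1⟩, fun F hF hcross => ?_⟩
  by_contra! hlt
  obtain ⟨p, hp, hmin⟩ := F.exists_min_image Prod.snd (Finset.card_pos.1 (by omega))
  have hC := isAvoidingChain_of_pairwise_crosses hF hcross hp hmin
  have card_image := Finset.card_image_of_injective F diagonalCell_injective
  have card_row := hC.card_le_row
  have card_col := hC.card_le_col
  have card_le := h (n - p.2) (by omega) (by omega) _
    (by rwa [hn, Nat.sub_sub_self p.2.isLt.le])
  omega

/-- The subwords of the staircase word that are reduced words of the partially reversed word;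
their complements are the `k`-triangulations of the `(N + k)`-gon. -/
def IsReducedSubset (N k : ℕ) (S : Finset (ℕ × ℕ)) : Prop :=
  S ⊆ (staircaseWord N (N - 1)).toFinset ∧
    IsReducedSubword S (staircaseWord N (N - 1)) (reverseAbove N k k)

theorem IsReducedSubset.add_two_le (h : IsReducedSubset N k S) {c : ℕ × ℕ} (hc : c ∈ S) :
    c.1 + c.2 + 2 ≤ N :=
  (mem_staircaseWord.1 (List.mem_toFinset.1 (h.1 hc))).2

theorem IsReducedSubset.le_add (h : IsReducedSubset N k S) (hN : k + 1 ≤ N) {c : ℕ × ℕ}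
    (hc : c ∈ S) : k ≤ c.1 + c.2 :=
  h.2.le_of_mem (reverseAbove_injective hN) (fun _ hb => if_pos hb) c
    (List.mem_toFinset.1 (h.1 hc)) hc

theorem IsReducedSubset.complementCells_complementDiagonals (h : IsReducedSubset N k S)
    (hn : N + k = n) (hN : k + 1 ≤ N) (hk : 1 ≤ k) :
    complementCells N k (complementDiagonals n S) = S :=
  _root_.complementCells_complementDiagonals hn hk (fun _ => h.add_two_le) fun _ => h.le_add hN

theorem IsReducedSubset.validFam (h : IsReducedSubset N k S) (hn : N + k = n)
    (hN : k + 1 ≤ N) : ValidFam n k (complementDiagonals n S) :=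
  validFam_complementDiagonals hn <|
    (exists_isReducedSubword_reverseAbove_iff hN fun _ => h.add_two_le).1 ⟨S, subset_rfl, h.2⟩

theorem ValidFam.exists_isReducedSubset (h : ValidFam n k D) (hn : N + k = n)
    (hN : k + 1 ≤ N) : ∃ S ⊆ complementCells N k D, IsReducedSubset N k S := by
  obtain ⟨S, hS, hred⟩ := (exists_isReducedSubword_reverseAbove_iff hN
    fun c hc => (mem_complementCells.1 hc).1).2 fun r _ hr C hC =>
      h.card_le_of_isAvoidingChain hn hr hC
  refine ⟨S ∩ (staircaseWord N (N - 1)).toFinset, Finset.inter_subset_left.trans hS,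
    Finset.inter_subset_right, (isReducedSubword_congr fun c hc => ?_).1 hred⟩
  rw [Finset.mem_inter, List.mem_toFinset, and_iff_left hc]

theorem isKTri_iff (hn : N + k = n) (hN : k + 1 ≤ N) (hk : 1 ≤ k) :
    IsKTri n k D ↔ ∃ S, IsReducedSubset N k S ∧ complementDiagonals n S = D := by
  constructor
  · rintro ⟨hD, hmax⟩
    obtain ⟨S, hSD, hS⟩ := hD.exists_isReducedSubset hn hN
    exact ⟨S, hS, hmax _ (hD.subset_complementDiagonals_complementCells.trans
      (complementDiagonals_anti hSD)) (hS.validFam hn hN)⟩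
  · rintro ⟨S, hS, rfl⟩
    refine ⟨hS.validFam hn hN, fun D' hD hD' => Set.Subset.antisymm ?_ hD⟩
    obtain ⟨S', hS'D, hS'⟩ := hD'.exists_isReducedSubset hn hN
    have subset_S : complementCells N k D' ⊆ S :=
      (complementCells_anti hD).trans_eq (hS.complementCells_complementDiagonals hn hN hk)
    have subset_S' : S ⊆ S' := fun c hc =>
      IsReducedSubword.mem_of_subset (hS'D.trans subset_S) (nodup_staircaseWord N _)
        (reverseAbove_injective hN) hS.2 hS'.2 c (List.mem_toFinset.1 (hS.1 hc)) hc
    exact hD'.subset_complementDiagonals_complementCells.trans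
      (complementDiagonals_anti (subset_S'.trans hS'D))

theorem complementDiagonals_injOn (hn : N + k = n) (hN : k + 1 ≤ N) (hk : 1 ≤ k) :
    Set.InjOn (complementDiagonals n) {S | IsReducedSubset N k S} := fun S hS S' hS' h => by
  rw [← hS.complementCells_complementDiagonals hn hN hk, h,
    hS'.complementCells_complementDiagonals hn hN hk]

/-- The cells in row `v` that encode nontrivial diagonals of the `(N + k)`-gon. -/
def nontrivialCells (N k v : ℕ) : Finset (ℕ × ℕ) := {v} ×ˢ Finset.Ico (k - v) (N - 1 - v)

theorem mem_nontrivialCells {c : ℕ × ℕ} :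
    c ∈ nontrivialCells N k v ↔ c.1 = v ∧ k ≤ c.1 + c.2 ∧ c.1 + c.2 + 2 ≤ N := by
  rw [nontrivialCells, Finset.mem_product, Finset.mem_singleton, Finset.mem_Ico]
  omega

theorem card_nontrivialCells : (nontrivialCells N k v).card = (N - 1 - v) - (k - v) := by
  rw [nontrivialCells, Finset.card_product, Finset.card_singleton, one_mul, Nat.card_Ico]

theorem triDeg_complementDiagonals (hn : N + k = n) (hk : 1 ≤ k) (v : Fin n) :
    triDeg n k (complementDiagonals n S) v = (nontrivialCells N k v \ S).card := by
  have image_eq : diagonalCell '' {p | p ∈ complementDiagonals n S ∧ p.1 = v ∧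
      k < cdist n p.1 p.2} = (nontrivialCells N k v \ S : Finset (ℕ × ℕ)) := by
    ext c
    rw [Finset.mem_coe, Finset.mem_sdiff, mem_nontrivialCells]
    constructor
    · rintro ⟨p, ⟨hp, hv, hcd⟩, rfl⟩
      exact ⟨⟨congrArg Fin.val hv, (lt_cdist_iff_diagonalCell hn hp.1).1 hcd⟩, hp.2.2⟩
    · rintro ⟨⟨hv, hc⟩, hS⟩
      obtain ⟨p, hp, rfl⟩ := exists_diagonalCell_eq (n := n) (c := c) (by omega)
      have hcd := (lt_cdist_iff_diagonalCell hn hp).2 hc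
      exact ⟨p, ⟨⟨hp, hk.trans_lt hcd, hS⟩, Fin.ext hv, hcd⟩, rfl⟩
  rw [← Set.ncard_coe_finset, ← image_eq, Set.ncard_image_of_injective _ diagonalCell_injective]
  rfl

/-- The number of cells of `S` in row `i`; it is the exponent of `x i` in the monomial of `S`. -/
def rowCount (S : Finset (ℕ × ℕ)) (i : ℕ) : ℕ := ({c ∈ S | c.1 = i} : Finset (ℕ × ℕ)).card

theorem IsReducedSubset.triDeg_add_rowCount (h : IsReducedSubset N k S) (hn : N + k = n)
    (hN : k + 1 ≤ N) (hk : 1 ≤ k) (v : Fin n) :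
    triDeg n k (complementDiagonals n S) v + rowCount S v = (nontrivialCells N k v).card := by
  have row_eq : ({c ∈ S | c.1 = v} : Finset (ℕ × ℕ)) = nontrivialCells N k v ∩ S := by
    ext c
    rw [Finset.mem_filter, Finset.mem_inter, mem_nontrivialCells]
    exact ⟨fun hc => ⟨⟨hc.2, h.le_add hN hc.1, h.add_two_le hc.1⟩, hc.1⟩, fun hc => ⟨hc.2, hc.1.1⟩⟩
  rw [triDeg_complementDiagonals hn hk, rowCount, row_eq, Finset.card_sdiff_add_card_inter]

end Complements

/-! ### Comparing coefficients -/

section Coefficients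

variable {α β : Type*} {A : Finset α} {A' : Finset β}

open MvPolynomial in
theorem map_val_eq_of_sum_monomial_eq {σ : Type*} {e : α → σ →₀ ℕ} {e' : β → σ →₀ ℕ}
    (h : ∑ a ∈ A, monomial (e a) (1 : ℤ) = ∑ b ∈ A', monomial (e' b) 1) :
    A.val.map e = A'.val.map e' := by
  classical
  ext g
  have coeff_eq := congrArg (coeff g) h
  simp only [coeff_sum, coeff_monomial, Finset.sum_boole, Nat.cast_inj] at coeff_eq
  rw [Multiset.count_map, Multiset.count_map]
  simpa only [Finset.card_def, Finset.filter_val, eq_comm (a := g)] using coeff_eq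

theorem map_val_eq_of_sum_prod_pow_eq {N : ℕ} {e : α → ℕ → ℕ} {e' : β → ℕ → ℕ}
    (h : ∀ (K : Type) [Field K] (x : ℕ → K), Function.Injective x →
      ∑ a ∈ A, ∏ i ∈ Finset.range N, x i ^ e a i = ∑ b ∈ A', ∏ i ∈ Finset.range N, x i ^ e' b i) :
    A.val.map (fun a (i : Fin N) => e a i) = A'.val.map fun b (i : Fin N) => e' b i := by
  have algebraMap_injective := IsFractionRing.injective (MvPolynomial ℕ ℤ)
    (FractionRing (MvPolynomial ℕ ℤ))
  have sum_eq := h (FractionRing (MvPolynomial ℕ ℤ)) (fun i => algebraMap _ _ (MvPolynomial.X i))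
    (algebraMap_injective.comp MvPolynomial.X_injective)
  simp only [← map_pow, ← map_prod, ← map_sum, MvPolynomial.X_pow_eq_monomial,
    ← MvPolynomial.monomial_sum_one] at sum_eq
  have map_eq := map_val_eq_of_sum_monomial_eq (algebraMap_injective sum_eq)
  have restrict (g : ℕ → ℕ) :
      (fun i : Fin N => (∑ j ∈ Finset.range N, Finsupp.single j (g j)) i) = fun i : Fin N => g i :=
    funext fun i => by
      simp [Finsupp.finsetSum_apply, Finsupp.single_apply]
  simpa only [Multiset.map_map, Function.comp_def, restrict] using
    congrArg (Multiset.map fun g (i : Fin N) => g i) map_eq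

theorem card_filter_eq_of_sum_prod_pow_eq {N : ℕ} {e : α → ℕ → ℕ} {e' : β → ℕ → ℕ}
    (h : ∀ (K : Type) [Field K] (x : ℕ → K), Function.Injective x →
      ∑ a ∈ A, ∏ i ∈ Finset.range N, x i ^ e a i = ∑ b ∈ A', ∏ i ∈ Finset.range N, x i ^ e' b i)
    (p : (Fin N → ℕ) → Prop) [DecidablePred p] :
    (A.filter fun a => p fun i => e a i).card = (A'.filter fun b => p fun i => e' b i).card := by
  have countP_eq := congrArg (Multiset.countP p) (map_val_eq_of_sum_prod_pow_eq h)
  rwa [Multiset.countP_map, Multiset.countP_map] at countP_eq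

end Coefficients

section Degrees

variable {k n N m : ℕ}

theorem IsReducedSubset.prod_fst {K : Type*} [Field K] {S : Finset (ℕ × ℕ)}
    (h : IsReducedSubset N k S) (x : ℕ → K) :
    ∏ c ∈ S, x c.1 = ∏ i ∈ Finset.range N, x i ^ rowCount S i := by
  have row_mem : ∀ c ∈ S, c.1 ∈ Finset.range N := fun c hc => by
    have := h.add_two_le hc
    rw [Finset.mem_range]
    omega
  simp only [← Finset.prod_fiberwise_of_maps_to' row_mem, Finset.prod_const, rowCount]

open Classical in
theorem card_isReducedSubset_eq_card_inPk {T B : Fin m → Fin (m + 1)} (hT : ∀ j, (T j : ℕ) = m)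
    (hB : ∀ j, (B j : ℕ) = j) (p : (Fin (m + k + 1) → ℕ) → Prop) :
    Nat.card {S // IsReducedSubset (m + k + 1) k S ∧ p fun i => rowCount S i} =
      Nat.card {P : Fin k → Fin m → Fin (m + 1) //
        InPk T B P ∧ p fun i => fanExponent T B P i} := by
  have reduced_eq_fans := card_filter_eq_of_sum_prod_pow_eq
    (A := (staircaseWord (m + k + 1) (m + k)).toFinset.powerset.filter fun S =>
      IsReducedSubword S (staircaseWord (m + k + 1) (m + k)) (reverseAbove (m + k + 1) k k))
    (A' := Finset.univ.filter fun P : Fin k → Fin m → Fin (m + 1) => InPk T B P)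
    (N := m + k + 1) (e := rowCount) (e' := fanExponent T B) (fun K _ x hx => by
      rw [← staircaseSum_eq_sum_paths hT hB, staircaseSum_eq_fanPoly k m hx,
        ← pipeDreamPoly_eq_fanPoly k m hx, pipeDreamPoly_eq_sum]
      exact Finset.sum_congr rfl fun S hS => (IsReducedSubset.prod_fst (k := k) (by
        rwa [Finset.mem_filter, Finset.mem_powerset] at hS) x).symm) p
  rw [Nat.subtype_card _ fun S => ?_, Nat.subtype_card _ fun P => ?_]
  · exact reduced_eq_fans
  · rw [Finset.mem_filter, Finset.mem_filter_univ]
  · rw [Finset.mem_filter, Finset.mem_filter, Finset.mem_powerset, IsReducedSubset,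
      Nat.add_sub_cancel]

theorem card_isKTri_eq_card_isReducedSubset (hn : N + k = n) (hN : k + 1 ≤ N) (hk : 1 ≤ k)
    {ι : Type*} (v : ι → Fin n) (d : ι → ℕ) :
    Nat.card {D : Set (Fin n × Fin n) // IsKTri n k D ∧ ∀ i, triDeg n k D (v i) = d i} =
      Nat.card {S // IsReducedSubset N k S ∧
        ∀ i, rowCount S (v i) + d i = (nontrivialCells N k (v i)).card} := by
  have image_eq : complementDiagonals n '' {S | IsReducedSubset N k S ∧
      ∀ i, rowCount S (v i) + d i = (nontrivialCells N k (v i)).card} =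
      {D | IsKTri n k D ∧ ∀ i, triDeg n k D (v i) = d i} := by
    ext D
    simp only [Set.mem_image, Set.mem_ofPred_eq, isKTri_iff hn hN hk]
    constructor
    · rintro ⟨S, ⟨hS, hd⟩, rfl⟩
      refine ⟨⟨S, hS, rfl⟩, fun i => ?_⟩
      have := hS.triDeg_add_rowCount hn hN hk (v i)
      have := hd i
      omega
    · rintro ⟨⟨S, hS, rfl⟩, hd⟩
      refine ⟨S, ⟨hS, fun i => ?_⟩, rfl⟩
      rw [← hd i, add_comm, hS.triDeg_add_rowCount hn hN hk]
  change Set.ncard {D | _} = Set.ncard {S | _}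
  rw [← image_eq]
  exact ((complementDiagonals_injOn hn hN hk).mono fun S hS => hS.1).ncard_image

variable {T B : Fin m → Fin (m + 1)} (P : Fin k → Fin m → Fin (m + 1)) {i : ℕ}

theorem fanExponent_add_hstat (hi : i < k + 1) :
    fanExponent T B P i + hstat T B P ⟨i, hi⟩ = m := by
  rw [fanExponent, dif_pos hi, Nat.sub_add_cancel]
  unfold hstat
  simpa only [Nat.card_fin] using Finite.card_subtype_le (α := Fin m) _

theorem fanExponent_eq_ustat (hk : k + 1 ≤ i) (hi : i - (k + 1) < m - 1) :
    fanExponent T B P i = ustat T B P ⟨i - (k + 1), hi⟩ := by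
  rw [fanExponent, dif_neg hk.not_gt, dif_pos hi]

theorem forall_fanExponent_add_eq_card_iff (hn : m + k + 1 + k = n) (d : Fin (n - k - 1) → ℕ) :
    (∀ i : Fin (n - k - 1), fanExponent T B P i + d i = (nontrivialCells (m + k + 1) k i).card) ↔
      (∀ (i : Fin (n - k - 1)) (hik : (i : ℕ) < k + 1), hstat T B P ⟨i, hik⟩ = d i) ∧
      ∀ (i : Fin (n - k - 1)) (hik : k + 1 ≤ (i : ℕ)),
        ustat T B P ⟨i - (k + 1), by omega⟩ + d i + k + (i + 1) = n := by
  simp only [card_nontrivialCells]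
  constructor
  · refine fun h => ⟨fun i hik => ?_, fun i hik => ?_⟩ <;> have at_i := h i
    · have := fanExponent_add_hstat (T := T) (B := B) P hik
      omega
    · rw [fanExponent_eq_ustat P hik (by omega)] at at_i
      omega
  · rintro ⟨low, high⟩ i
    rcases lt_or_ge (i : ℕ) (k + 1) with hik | hik
    · have := low i hik
      have := fanExponent_add_hstat (T := T) (B := B) P hik
      omega
    · have := high i hik
      rw [fanExponent_eq_ustat P hik (by omega)]
      omega

end Degrees

/-- Refinement of Nicolás' conjecture: `k`-triangulations of the convex `n`-gon
with degree sequence `(d_1, …, d_{n-k-1})` are equinumerous with `k`-fans of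
Dyck paths with `h_{i-1} = d_i` for `1 ≤ i ≤ k+1` and
`u_{i-k-1} + d_i + k + i = n` for `k+1 < i ≤ n-k-1`. -/
theorem stmt17 (k n : ℕ) (hk : 1 ≤ k) (hn : 2*k + 1 ≤ n)
    (T B : Fin (n - 2*k - 1) → Fin ((n - 2*k - 1) + 1))
    (hT : ∀ j, (T j : ℕ) = n - 2*k - 1) (hB : ∀ j, (B j : ℕ) = (j : ℕ))
    (d : Fin (n - k - 1) → ℕ) :
    Nat.card {D : Set (Fin n × Fin n) // IsKTri n k D ∧
        ∀ i : Fin (n - k - 1), triDeg n k D ⟨(i : ℕ), by have := i.isLt; omega⟩ = d i}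
    = Nat.card {P : Fin k → Fin (n - 2*k - 1) → Fin ((n - 2*k - 1) + 1) //
        InPk T B P ∧
        (∀ (i : Fin (n - k - 1)) (hik : (i : ℕ) < k + 1),
          hstat T B P ⟨(i : ℕ), hik⟩ = d i) ∧
        (∀ (i : Fin (n - k - 1)) (hik : k + 1 ≤ (i : ℕ)),
          ustat T B P ⟨(i : ℕ) - (k + 1), by have := i.isLt; omega⟩ + d i + k + ((i : ℕ) + 1) = n)} := by
  have hN : n - 2 * k - 1 + k + 1 + k = n := by omega
  rw [card_isKTri_eq_card_isReducedSubset hN (by omega) hk fun i : Fin (n - k - 1) =>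
      (⟨i, by omega⟩ : Fin n), card_isReducedSubset_eq_card_inPk hT hB fun e =>
      ∀ i : Fin (n - k - 1), e ⟨i, by omega⟩ + d i =
        (nontrivialCells (n - 2 * k - 1 + k + 1) k i).card]
  exact Nat.card_congr <| Equiv.subtypeEquivRight fun P =>
    and_congr_right fun _ => forall_fanExponent_add_eq_card_iff P hN d
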